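/- arXiv:1509.01376 — 2 statements merged into one kernel-verified Lean document; each statement's English description precedes it below -/
import Mathlib

section
/- Let n ≥ 1 and let w ∈ U(n) ∗ F₁ be a one-variable word with coefficients in the unitary group U(n) whose content ε(w) ∈ F₁ ≅ ℤ is nonzero. Then there exists u ∈ U(n) such that the evaluation homomorphism U(n) ∗ F₁ → U(n) (identity on U(n), x₁ ↦ u) sends w to the identity matrix; i.e., every non-singular one-variable equation with coefficients in U(n) can be solved in U(n). -/
open MeasureTheory Set Filter Topology

theorem GR.hasDerivAt_integral {G : Type*} [TopologicalSpace G] [CompactSpace G]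
    [MeasurableSpace G] [OpensMeasurableSpace G] (μ : Measure G) [IsFiniteMeasure μ]
    (K K' : ℝ → G → ℝ) (hK : Continuous (Function.uncurry K))
    (hK' : Continuous (Function.uncurry K'))
    (hd : ∀ t u, HasDerivAt (fun s => K s u) (K' t u) t) (t : ℝ) :
    HasDerivAt (fun s => ∫ u, K s u ∂μ) (∫ u, K' t u ∂μ) t := by
  have hc : IsCompact (Icc (t - 1) (t + 1) ×ˢ (univ : Set G)) := isCompact_Icc.prod isCompact_univ
  obtain ⟨C, hC⟩ := hc.exists_bound_of_continuousOn hK'.continuousOn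
  have hKt : ∀ s, Continuous (K s) := fun s => hK.comp (Continuous.prodMk_right s)
  have hKt' : ∀ s, Continuous (K' s) := fun s => hK'.comp (Continuous.prodMk_right s)
  refine (hasDerivAt_integral_of_dominated_loc_of_deriv_le (F := K) (F' := K')
    (s := Icc (t - 1) (t + 1)) (bound := fun _ => C) (Icc_mem_nhds (by linarith) (by linarith))
    ?_ ?_ ?_ ?_ ?_ ?_).2
  · exact Eventually.of_forall fun s => (hKt s).aestronglyMeasurable
  · exact (hKt t).integrable_of_hasCompactSupport (HasCompactSupport.of_compactSpace _)
  · exact (hKt' t).aestronglyMeasurable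
  · exact Eventually.of_forall fun u s hs => hC (s, u) ⟨hs, mem_univ _⟩
  · exact integrable_const _
  · exact Eventually.of_forall fun u s _ => hd s u

theorem GR.det_nonneg {V : Type*} [NormedAddCommGroup V] [NormedSpace ℝ V]
    [FiniteDimensional ℝ V] (R : V →ₗ[ℝ] V) (hR : ∀ x, ‖R x‖ = ‖x‖) (k : ℕ) :
    0 ≤ LinearMap.det (∑ i ∈ Finset.range k, R ^ i) := by
  have hcont : ∀ f : ℝ → (V →ₗ[ℝ] V), (∀ x, Continuous fun s => f s x) →
      Continuous fun s => LinearMap.det (f s) := by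
    intro f hf
    let b := Module.finBasis ℝ V
    have : (fun s => LinearMap.det (f s)) =
        fun s => (LinearMap.toMatrix b b (f s)).det := by
      funext s; rw [LinearMap.det_toMatrix]
    rw [this]
    apply Continuous.matrix_det
    apply continuous_matrix
    intro i j
    simp only [LinearMap.toMatrix_apply]
    have h1 : Continuous (b.equivFun : V → _) := b.equivFun.toLinearMap.continuous_of_finiteDimensional
    exact (continuous_apply i).comp (h1.comp (hf (b j)))
  have hpos : ∀ (S : V →ₗ[ℝ] V), (∀ x, ‖S x‖ = ‖x‖) → ∀ s : ℝ, 0 ≤ s → s < 1 →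
      0 < LinearMap.det (1 - s • S) := by
    intro S hS s hs0 hs1
    have hc : Continuous fun r : ℝ => LinearMap.det (1 - r • S) := hcont _ (by
      intro x
      simp only [LinearMap.sub_apply, LinearMap.smul_apply, Module.End.one_apply]
      fun_prop)
    by_contra hneg
    push Not at hneg
    have h0 : LinearMap.det (1 - (0:ℝ) • S) = 1 := by simp
    obtain ⟨r, hr, hr0⟩ := intermediate_value_Icc' hs0 hc.continuousOn
      (show (0:ℝ) ∈ Icc _ _ from ⟨hneg, by simp only [h0]; norm_num⟩)
    have hinj : LinearMap.ker (1 - r • S) = ⊥ := by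
      rw [LinearMap.ker_eq_bot']
      intro x hx
      have : x = r • S x := by
        simpa [sub_eq_zero] using hx
      have h2 : ‖x‖ = r * ‖x‖ := by
        conv_lhs => rw [this]
        rw [norm_smul, hS, Real.norm_of_nonneg hr.1]
      have : (1 - r) * ‖x‖ = 0 := by linarith
      rcases mul_eq_zero.1 this with h | h
      · linarith [hr.2]
      · exact norm_eq_zero.1 h
    exact (LinearMap.isUnit_det _ ((LinearMap.isUnit_iff_ker_eq_bot _).2 hinj)).ne_zero hr0
  have hRk : ∀ x, ‖(R ^ k) x‖ = ‖x‖ := by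
    clear hpos
    induction k with
    | zero => simp
    | succ k ih => intro x; rw [pow_succ, Module.End.mul_apply, ih, hR]
  have hc : Continuous fun s : ℝ => LinearMap.det (∑ i ∈ Finset.range k, (s • R) ^ i) := hcont _ (by
    intro x
    simp only [LinearMap.sum_apply, smul_pow, LinearMap.smul_apply]
    fun_prop)
  have h1 : Tendsto (fun s : ℝ => LinearMap.det (∑ i ∈ Finset.range k, (s • R) ^ i)) (𝓝[<] 1)
      (𝓝 (LinearMap.det (∑ i ∈ Finset.range k, R ^ i))) := by
    have := (hc.tendsto 1).mono_left (nhdsWithin_le_nhds (s := Iio 1))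
    simpa using this
  refine ge_of_tendsto h1 ?_
  filter_upwards [Ioo_mem_nhdsLT (show (0:ℝ) < 1 by norm_num)] with s hs
  rcases Nat.eq_zero_or_pos k with rfl | hk
  · simp only [Finset.range_zero, Finset.sum_empty]
    by_cases hV : Module.finrank ℝ V = 0
    · simp [LinearMap.det_zero, hV]
    · simp [LinearMap.det_zero, hV]
  have hg := geom_sum_mul_neg (s • R) k
  have h3 := congrArg LinearMap.det hg
  rw [map_mul, smul_pow] at h3
  have h4 := hpos R hR s hs.1.le hs.2
  have h5 := hpos (R ^ k) hRk (s ^ k) (pow_nonneg hs.1.le _) (pow_lt_one₀ hs.1.le hs.2 hk.ne')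
  rw [← h3] at h5
  exact (pos_of_mul_pos_left h5 h4.le).le

theorem GR.exists_path {A : Type*} [CStarAlgebra A] (hfin : ∀ a : A, (spectrum ℂ a).Finite)
    (g : unitary A) : ∃ c : ℝ → A, ContDiff ℝ 2 c ∧ (∀ t, c t ∈ unitary A) ∧ c 0 = 1 ∧ c 1 = g := by
  open Complex Unitary selfAdjoint in
  have hexp : expUnitary (argSelfAdjoint g) = g := by
    ext
    have : ContinuousOn arg (spectrum ℂ (g : A)) := (hfin _).continuousOn _
    rw [expUnitary_coe, argSelfAdjoint_coe, ← CFC.exp_eq_normedSpace_exp (𝕜 := ℂ),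
      ← cfc_comp_smul .., ← cfc_comp' ..]
    conv_rhs => rw [← cfc_id' ℂ (g : A)]
    refine cfc_congr fun y hy ↦ ?_
    have hy₁ : ‖y‖ = 1 := spectrum.norm_eq_one_of_unitary g.2 hy
    have : I * y.arg = log y :=
      Complex.ext (by simp [log_re, spectrum.norm_eq_one_of_unitary g.2 hy]) (by simp [log_im])
    simpa [← exp_eq_exp_ℂ, this] using exp_log (by aesop)
  refine ⟨fun t => selfAdjoint.expUnitary (t • Unitary.argSelfAdjoint g), ?_, fun t => (selfAdjoint.expUnitary _).2, by simp, by simp [hexp]⟩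
  simp only [selfAdjoint.expUnitary_coe]
  have h1 : ContDiff ℝ 2 (NormedSpace.exp : A → A) := by
    rw [contDiff_iff_contDiffAt]
    intro x
    exact (NormedSpace.exp_analytic (𝕂 := ℝ) x).contDiffAt
  refine h1.comp ?_
  simp only [selfAdjoint.val_smul]
  fun_prop

theorem GR.exp_hasDerivAt {A : Type*} [CStarAlgebra A] (X : A) (s : ℝ) :
    HasDerivAt (fun s : ℝ => NormedSpace.exp (s • X)) (X * NormedSpace.exp (s • X)) s :=
  hasDerivAt_exp_smul_const' X s

theorem GR.exp_unitary {A : Type*} [CStarAlgebra A] {X : A} (hX : X ∈ skewAdjoint A) (s : ℝ) :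
    NormedSpace.exp (s • X) ∈ unitary A :=
  let +nondep : NormedAlgebra ℚ A := .restrictScalars ℚ ℂ A
  NormedSpace.exp_mem_unitary_of_mem_skewAdjoint (skewAdjoint.smul_mem s hX)

theorem GR.integral_fderiv_zero {A : Type*} [CStarAlgebra A] [CompactSpace (unitary A)]
    [MeasurableSpace (unitary A)] [BorelSpace (unitary A)]
    (μ : Measure (unitary A)) [IsFiniteMeasure μ] [μ.IsMulLeftInvariant]
    (h : A → ℝ) (hh : ContDiff ℝ 1 h) (X : A) (hX : X ∈ skewAdjoint A) :
    ∫ u : unitary A, fderiv ℝ h (u : A) (X * u) ∂μ = 0 := by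
  let e : ℝ → unitary A := fun s => ⟨NormedSpace.exp (s • X), GR.exp_unitary hX s⟩
  have he : Continuous fun s : ℝ => NormedSpace.exp (s • X) :=
    continuous_iff_continuousAt.2 fun s => (GR.exp_hasDerivAt X s).continuousAt
  have hf : Continuous (fderiv ℝ h) := hh.continuous_fderiv one_ne_zero
  have key := GR.hasDerivAt_integral μ (fun s u => h (NormedSpace.exp (s • X) * u))
    (fun s u => fderiv ℝ h (NormedSpace.exp (s • X) * u) (X * NormedSpace.exp (s • X) * u))
    (by
      refine hh.continuous.comp (?_ : Continuous fun p : ℝ × unitary A => _)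
      exact (he.comp continuous_fst).mul (continuous_subtype_val.comp continuous_snd))
    (by
      have h1 : Continuous fun p : ℝ × unitary A => NormedSpace.exp (p.1 • X) * (p.2 : A) :=
        (he.comp continuous_fst).mul (continuous_subtype_val.comp continuous_snd)
      have h2 : Continuous fun p : ℝ × unitary A => X * NormedSpace.exp (p.1 • X) * (p.2 : A) :=
        (continuous_const.mul (he.comp continuous_fst)).mul
          (continuous_subtype_val.comp continuous_snd)
      exact (hf.comp h1).clm_apply h2)
    (by
      intro t u
      have h1 := (GR.exp_hasDerivAt X t).mul_const (u : A)
      exact ((hh.differentiable one_ne_zero) _).hasFDerivAt.comp_hasDerivAt t h1) 0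
  have hconst : (fun s : ℝ => ∫ u : unitary A, h (NormedSpace.exp (s • X) * u) ∂μ) =
      fun _ => ∫ u : unitary A, h u ∂μ := by
    funext s
    exact integral_mul_left_eq_self (fun u : unitary A => h u) (e s)
  rw [hconst] at key
  have := key.unique (hasDerivAt_const _ _)
  simpa using this

theorem GR.tangent {A : Type*} [CStarAlgebra A] {c : ℝ → A} {c' : A} {t : ℝ}
    (hc : HasDerivAt c c' t) (hu : ∀ s, c s ∈ unitary A) : c' * star (c t) ∈ skewAdjoint A := by
  have h1 : HasDerivAt (fun s => c s * star (c s)) (c' * star (c t) + c t * star c') t :=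
    hc.mul hc.star
  have h2 : (fun s => c s * star (c s)) = fun _ => 1 := by
    funext s; exact Unitary.mul_star_self_of_mem (hu s)
  rw [h2] at h1
  have h3 := h1.unique (hasDerivAt_const _ _)
  rw [skewAdjoint.mem_iff, star_mul, star_star]
  exact (neg_eq_of_add_eq_zero_right h3).symm

theorem GR.alt_zero {W : Type*} [AddCommGroup W] [Module ℝ W] [TopologicalSpace W] {N : ℕ}
    (ω : W [⋀^Fin (N + 1)]→L[ℝ] ℝ) (c : W) (r : Fin N → W)
    (hc : c ∈ Submodule.span ℝ (range r)) : ω (Matrix.vecCons c r) = 0 := by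
  refine AlternatingMap.map_linearDependent ω.toAlternatingMap _ ?_
  intro h
  have := (linearIndependent_finCons (K := ℝ)).1 h
  exact this.2 hc

/-- the frame of vector fields -/
noncomputable def GR.frame {A : Type*} [CStarAlgebra A] {N : ℕ} (X : Fin N → A) (i : Fin (N + 1)) :
    ℝ × A → ℝ × A := fun x =>
  Fin.cases (motive := fun _ => ℝ × A) ((1, 0) : ℝ × A) (fun j => (0, X j * x.2)) i

theorem GR.frame_hasFDerivAt {A : Type*} [CStarAlgebra A] {N : ℕ} (X : Fin N → A)
    (i : Fin (N + 1)) (x : ℝ × A) :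
    HasFDerivAt (GR.frame X i) (Fin.cases (motive := fun _ => (ℝ × A) →L[ℝ] (ℝ × A)) 0
      (fun j => (ContinuousLinearMap.inr ℝ ℝ A).comp
        ((ContinuousLinearMap.mul ℝ A (X j)).comp (ContinuousLinearMap.snd ℝ ℝ A))) i) x := by
  induction i using Fin.cases with
  | zero => exact hasFDerivAt_const _ _
  | succ j => 
    exact ContinuousLinearMap.hasFDerivAt ((ContinuousLinearMap.inr ℝ ℝ A).comp
        ((ContinuousLinearMap.mul ℝ A (X j)).comp (ContinuousLinearMap.snd ℝ ℝ A)))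

theorem GR.extDeriv_frame {A : Type*} [CStarAlgebra A] {N : ℕ} (X : Fin (N + 1) → A)
    (hX : ∀ i j, X i * X j - X j * X i ∈
      Submodule.span ℝ (X '' {k | k ≠ i ∧ k ≠ j}))
    (Ω : ℝ × A → (ℝ × A) [⋀^Fin (N + 1)]→L[ℝ] ℝ) (x : ℝ × A) (hΩ : DifferentiableAt ℝ Ω x) :
    extDeriv Ω x (fun i => GR.frame X i x) =
      ∑ i : Fin (N + 2), (-1) ^ i.val •
        fderiv ℝ (fun x ↦ Ω x (i.removeNth (fun j => GR.frame X j x))) x (GR.frame X i x) := by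
  rw [extDeriv_apply_vectorField hΩ (fun i => (GR.frame_hasFDerivAt X i x).differentiableAt),
    sub_eq_self]
  refine Finset.sum_eq_zero fun i _ => Finset.sum_eq_zero fun j hj => ?_
  rw [GR.alt_zero, smul_zero]
  have hij : i ≤ j := by simpa using hj
  have hrange : ∀ k, k ≠ i.castSucc → k ≠ j.succ → GR.frame X k x ∈
      range (j.removeNth <| i.castSucc.removeNth (fun k => GR.frame X k x)) := by
    intro k hk1 hk2
    obtain ⟨k', rfl⟩ := Fin.exists_succAbove_eq hk1
    have H₁ : i.castSucc.succAbove j = j.succ := by simp [Fin.succAbove_of_le_castSucc, hij]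
    have : k' ≠ j := by
      rintro rfl; exact hk2 H₁
    obtain ⟨k'', rfl⟩ := Fin.exists_succAbove_eq this
    exact ⟨k'', rfl⟩
  rw [VectorField.lieBracket_eq]
  simp only [(GR.frame_hasFDerivAt X _ x).fderiv]
  cases i using Fin.cases with
  | zero =>
    simp only [GR.frame, Fin.castSucc_zero, Fin.cases_zero, Fin.cases_succ]
    simp only [zero_apply, ContinuousLinearMap.comp_apply]
    simp only [ContinuousLinearMap.coe_snd', map_zero, sub_zero]
    exact Submodule.zero_mem _
  | succ i =>
    have e1 : (Fin.succ i).castSucc = (i.castSucc).succ := rfl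
    simp only [e1, Fin.cases_succ] at hrange ⊢
    have hmap : ((0 : ℝ), (X j * X i.castSucc - X i.castSucc * X j) * x.2) ∈
        Submodule.map ((ContinuousLinearMap.inr ℝ ℝ A).comp
          ((ContinuousLinearMap.mul ℝ A).flip x.2)).toLinearMap
          (Submodule.span ℝ (X '' {k | k ≠ j ∧ k ≠ i.castSucc})) :=
      ⟨_, hX _ _, by simp [sub_mul]⟩
    rw [Submodule.map_span] at hmap
    have hle : Submodule.span ℝ ((((ContinuousLinearMap.inr ℝ ℝ A).comp
          ((ContinuousLinearMap.mul ℝ A).flip x.2)).toLinearMap) '' 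
          (X '' {k | k ≠ j ∧ k ≠ i.castSucc})) ≤ Submodule.span ℝ (range
          (j.removeNth <| (i.castSucc).succ.removeNth (fun k => GR.frame X k x))) := by
      refine Submodule.span_mono ?_
      rintro _ ⟨_, ⟨k, ⟨hk1, hk2⟩, rfl⟩, rfl⟩
      have := hrange k.succ (by simpa using hk2) (by simpa using hk1)
      simpa [GR.frame] using this
    have h5 := hle hmap
    convert h5 using 1
    simp [GR.frame, sub_mul, mul_assoc]

/-- the pulled back form -/
noncomputable def GR.form {A : Type*} [CStarAlgebra A] {N : ℕ} (D : A [⋀^Fin N]→L[ℝ] ℝ)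
    (φ : A → ℝ) (p : A) : A [⋀^Fin N]→L[ℝ] ℝ :=
  φ p • D.compContinuousLinearMap ((ContinuousLinearMap.mul ℝ A).flip (star p))

theorem GR.form_apply {A : Type*} [CStarAlgebra A] {N : ℕ} (D : A [⋀^Fin N]→L[ℝ] ℝ)
    (φ : A → ℝ) (p : A) (v : Fin N → A) : GR.form D φ p v = φ p * D (fun j => v j * star p) := rfl

theorem GR.form_differentiable {A : Type*} [CStarAlgebra A] {N : ℕ} (D : A [⋀^Fin N]→L[ℝ] ℝ)
    (φ : A → ℝ) (hφ : ContDiff ℝ 1 φ) (p : A) : DifferentiableAt ℝ (GR.form D φ) p := by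
  refine DifferentiableAt.smul (hφ.differentiable one_ne_zero p) ?_
  refine DifferentiableAt.continuousAlternatingMapCompContinuousLinearMap
    (differentiableAt_const _) ?_
  exact (ContinuousLinearMap.mul ℝ A).flip.differentiableAt.comp p
    (starL' ℝ (A := A)).differentiableAt

theorem GR.contDiff_aux {A : Type*} [CStarAlgebra A] {N : ℕ} (D : A [⋀^Fin N]→L[ℝ] ℝ)
    (φ : A → ℝ) (hφ : ContDiff ℝ 1 φ) (F : ℝ × A → A) (hF : ContDiff ℝ 2 F)
    (V : Fin N → ℝ × A → ℝ × A) (hV : ∀ i, ContDiff ℝ 1 (V i)) :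
    ContDiff ℝ 1 fun x => ((GR.form D φ (F x)).compContinuousLinearMap (fderiv ℝ F x))
      (fun i => V i x) := by
  have hF1 : ContDiff ℝ 1 F := hF.of_le (by norm_num)
  have hF' : ContDiff ℝ 1 (fderiv ℝ F) := hF.fderiv_right (by norm_num)
  change ContDiff ℝ 1 fun x => φ (F x) * D.toContinuousMultilinearMap
    (fun j => fderiv ℝ F x (V j x) * star (F x))
  refine (hφ.comp hF1).mul (D.toContinuousMultilinearMap.contDiff.comp ?_)
  refine contDiff_pi.2 fun j => ?_
  exact (hF'.clm_apply (hV j)).mul ((starL' ℝ (A := A)).contDiff.comp hF1)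

theorem GR.frame_contDiff {A : Type*} [CStarAlgebra A] {N : ℕ} (X : Fin N → A)
    (i : Fin (N + 1)) : ContDiff ℝ 1 (GR.frame X i) := by
  induction i using Fin.cases with
  | zero => exact contDiff_const
  | succ j =>
    exact ContinuousLinearMap.contDiff ((ContinuousLinearMap.inr ℝ ℝ A).comp
        ((ContinuousLinearMap.mul ℝ A (X j)).comp (ContinuousLinearMap.snd ℝ ℝ A)))

theorem GR.closed {A : Type*} [CStarAlgebra A] {N : ℕ} [FiniteDimensional ℝ A]
    (hN : Module.finrank ℝ (skewAdjoint A) = N + 1)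
    (X : Fin (N + 1) → A) (hXs : ∀ i, X i ∈ skewAdjoint A)
    (D : A [⋀^Fin (N + 1)]→L[ℝ] ℝ)
    (φ : A → ℝ) (hφ : ContDiff ℝ 1 φ) (F : ℝ × A → A) (hF : ContDiff ℝ 2 F)
    (hFU : ∀ t, ∀ u ∈ unitary A, F (t, u) ∈ unitary A) (t : ℝ) (u : A) (hu : u ∈ unitary A) :
    extDeriv (fun x => (GR.form D φ (F x)).compContinuousLinearMap (fderiv ℝ F x)) (t, u)
      (fun i => GR.frame X i (t, u)) = 0 := by
  rw [extDeriv_pullback (GR.form_differentiable D φ hφ _) hF.contDiffAt (by simp)]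
  rw [ContinuousAlternatingMap.compContinuousLinearMap_apply]
  refine AlternatingMap.map_linearDependent
    (extDeriv (GR.form D φ) (F (t, u))).toAlternatingMap _ ?_
  have hFd : HasFDerivAt F (fderiv ℝ F (t, u)) (t, u) :=
    (hF.differentiable two_ne_zero _).hasFDerivAt
  have htan : ∀ i, fderiv ℝ F (t, u) (GR.frame X i (t, u)) * star (F (t, u)) ∈ skewAdjoint A := by
    intro i
    induction i using Fin.cases with
    | zero =>
      have h1 : HasDerivAt (fun s : ℝ => (s, u)) ((1 : ℝ), (0 : A)) t :=
        (hasDerivAt_id t).prodMk (hasDerivAt_const t u)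
      exact GR.tangent (hFd.comp_hasDerivAt t h1) (fun s => hFU s u hu)
    | succ j =>
      have h1 : HasDerivAt (fun s : ℝ => (t, NormedSpace.exp (s • X j) * u))
          ((0 : ℝ), X j * u) 0 := by
        refine (hasDerivAt_const _ t).prodMk ?_
        simpa using (GR.exp_hasDerivAt (X j) 0).mul_const u
      have h2 : F (t, u) = F (t, NormedSpace.exp ((0:ℝ) • X j) * u) := by simp
      have hFd' : HasFDerivAt F (fderiv ℝ F (t, u)) (t, NormedSpace.exp ((0:ℝ) • X j) * u) := by
        simpa using hFd
      have := GR.tangent (hFd'.comp_hasDerivAt (0 : ℝ) h1)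
        (fun s => hFU t _ (mul_mem (GR.exp_unitary (hXs j) s) hu))
      simpa [GR.frame] using this
  intro hli
  let y : Fin (N + 1 + 1) → skewAdjoint A := fun i => ⟨_, htan i⟩
  have hy : LinearIndependent ℝ y := by
    let L : skewAdjoint A →ₗ[ℝ] A :=
      { toFun := fun z => (z : A) * F (t, u)
        map_add' := fun a b => by simp [add_mul]
        map_smul' := fun a b => by simp }
    refine LinearIndependent.of_comp L ?_
    suffices e : L ∘ y = (fderiv ℝ F (t, u)) ∘ fun i => GR.frame X i (t, u) from e ▸ hli
    funext i
    simp only [Function.comp, L, y, LinearMap.coe_mk, AddHom.coe_mk]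
    rw [mul_assoc, Unitary.star_mul_self_of_mem (hFU t u hu), mul_one]
  have : FiniteDimensional ℝ (skewAdjoint A) := .of_finrank_pos (by omega)
  have := hy.fintype_card_le_finrank
  rw [hN, Fintype.card_fin] at this
  omega

theorem GR.integral_const {A : Type*} [CStarAlgebra A] {N : ℕ} [FiniteDimensional ℝ A]
    (hN : Module.finrank ℝ (skewAdjoint A) = N + 1)
    (X : Fin (N + 1) → A) (hXs : ∀ i, X i ∈ skewAdjoint A)
    (hX : ∀ i j, X i * X j - X j * X i ∈
      Submodule.span ℝ (X '' {k | k ≠ i ∧ k ≠ j}))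
    (D : A [⋀^Fin (N + 1)]→L[ℝ] ℝ)
    (φ : A → ℝ) (hφ : ContDiff ℝ 1 φ) (F : ℝ × A → A) (hF : ContDiff ℝ 2 F)
    (hFU : ∀ t, ∀ u ∈ unitary A, F (t, u) ∈ unitary A) 
    [CompactSpace (unitary A)]
    [MeasurableSpace (unitary A)] [BorelSpace (unitary A)]
    (μ : Measure (unitary A)) [IsFiniteMeasure μ] [μ.IsMulLeftInvariant] (t s : ℝ) :
    ∫ u : unitary A, φ (F (t, u)) *
      D (fun j => fderiv ℝ F (t, u) (0, X j * u) * star (F (t, u))) ∂μ =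
    ∫ u : unitary A, φ (F (s, u)) *
      D (fun j => fderiv ℝ F (s, u) (0, X j * u) * star (F (s, u))) ∂μ := by
  let Ω : ℝ × A → (ℝ × A) [⋀^Fin (N + 1)]→L[ℝ] ℝ :=
    fun x => (GR.form D φ (F x)).compContinuousLinearMap (fderiv ℝ F x)
  have hF' : ContDiff ℝ 1 (fderiv ℝ F) := hF.fderiv_right (by norm_num)
  have hΩ : ∀ x, DifferentiableAt ℝ Ω x := fun x =>
    DifferentiableAt.continuousAlternatingMapCompContinuousLinearMap
      ((GR.form_differentiable D φ hφ _).comp x (hF.differentiable two_ne_zero x))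
      (hF'.differentiable one_ne_zero x)
  let h : Fin (N + 2) → ℝ × A → ℝ := fun i x => Ω x (i.removeNth (fun j => GR.frame X j x))
  have hh : ∀ i, ContDiff ℝ 1 (h i) := fun i =>
    GR.contDiff_aux D φ hφ F hF (i.removeNth (GR.frame X)) (fun j => GR.frame_contDiff X _)
  have hh' : ∀ i, Continuous (fderiv ℝ (h i)) := fun i => (hh i).continuous_fderiv one_ne_zero
  have hid : ∀ t, ∀ u : unitary A, fderiv ℝ (h 0) (t, (u : A)) (1, 0) =
      ∑ i : Fin (N + 1), - ((-1) ^ (i.val + 1) *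
        fderiv ℝ (h i.succ) (t, (u : A)) (0, X i * u)) := by
    intro t u
    have h1 := GR.extDeriv_frame X hX Ω (t, (u : A)) (hΩ _)
    rw [GR.closed hN X hXs D φ hφ F hF hFU t u u.2, Fin.sum_univ_succ] at h1
    have h2 := eq_neg_of_add_eq_zero_left h1.symm
    rw [← Finset.sum_neg_distrib] at h2
    simpa [GR.frame, h] using h2
  have hval : Continuous (Subtype.val : unitary A → A) := continuous_subtype_val
  have hzero : ∀ t, ∫ u : unitary A, fderiv ℝ (h 0) (t, (u : A)) (1, 0) ∂μ = 0 := by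
    intro t
    simp_rw [hid]
    rw [integral_finsetSum]
    · refine Finset.sum_eq_zero fun i _ => ?_
      rw [integral_neg, integral_const_mul]
      have hc : ContDiff ℝ 1 fun a : A => h i.succ (t, a) :=
        (hh _).comp (contDiff_const.prodMk contDiff_id)
      have h3 := GR.integral_fderiv_zero μ (fun a => h i.succ (t, a)) hc (X i) (hXs i)
      have h4 : ∀ u : A, fderiv ℝ (fun a => h i.succ (t, a)) u (X i * u) =
          fderiv ℝ (h i.succ) (t, u) (0, X i * u) := by
        intro u
        have h5 : HasFDerivAt (fun a => h i.succ (t, a))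
            ((fderiv ℝ (h i.succ) (t, u)).comp (ContinuousLinearMap.inr ℝ ℝ A)) u :=
          ((hh i.succ).differentiable one_ne_zero (t, u)).hasFDerivAt.comp u
            (hasFDerivAt_prodMk_right t u)
        rw [h5.fderiv]; simp
      simp_rw [h4] at h3
      rw [h3]; simp
    · intro i _
      refine Continuous.integrable_of_hasCompactSupport ?_ (HasCompactSupport.of_compactSpace _)
      refine (continuous_const.mul (((hh' _).comp (continuous_const.prodMk hval)).clm_apply
        (continuous_const.prodMk (continuous_const.mul hval)))).neg
  have hder : ∀ t, HasDerivAt (fun s => ∫ u : unitary A, h 0 (s, (u : A)) ∂μ) 0 t := by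
    intro t
    rw [← hzero t]
    refine GR.hasDerivAt_integral μ (fun s u => h 0 (s, (u : A)))
      (fun s u => fderiv ℝ (h 0) (s, (u : A)) (1, 0)) ?_ ?_ ?_ t
    · exact (hh 0).continuous.comp (continuous_fst.prodMk (hval.comp continuous_snd))
    · exact ((hh' 0).comp (continuous_fst.prodMk (hval.comp continuous_snd))).clm_apply
        continuous_const
    · intro t u
      have h1 : HasDerivAt (fun s : ℝ => (s, (u : A))) ((1 : ℝ), (0 : A)) t :=
        (hasDerivAt_id t).prodMk (hasDerivAt_const t _)
      exact ((hh 0).differentiable one_ne_zero _).hasFDerivAt.comp_hasDerivAt t h1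
  exact is_const_of_deriv_eq_zero (fun t => (hder t).differentiableAt) (fun t => (hder t).deriv) t s

theorem GR.exists_basis {A : Type*} [CStarAlgebra A] {N : ℕ} [FiniteDimensional ℝ A]
    (τ : A →ₗ[ℂ] ℂ) (hτ : ∀ a b, τ (a * b) = τ (b * a))
    (hpos : ∀ a, a ≠ 0 → 0 < (τ (star a * a)).re)
    (hN : Module.finrank ℝ (skewAdjoint A) = N + 1) :
    ∃ b : Module.Basis (Fin (N + 1)) ℝ (skewAdjoint A), ∀ i j,
      (b i : A) * b j - b j * b i ∈
        Submodule.span ℝ ((fun i => (b i : A)) '' {k | k ≠ i ∧ k ≠ j}) := by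
  have : FiniteDimensional ℝ (skewAdjoint A) := .of_finrank_pos (by omega)
  let B : LinearMap.BilinForm ℝ (skewAdjoint A) := LinearMap.mk₂ ℝ
    (fun x y => (τ ((x : A) * y)).re)
    (by intros; simp [add_mul])
    (by intro c m n
        have : ((c • m : skewAdjoint A) : A) * n = (c : ℂ) • ((m : A) * n) := by
          rw [Complex.coe_smul]; simp
        rw [this, map_smul]; simp)
    (by intros; simp [mul_add])
    (by intro c m n
        have : (m : A) * ((c • n : skewAdjoint A) : A) = (c : ℂ) • ((m : A) * n) := by
          rw [Complex.coe_smul]; simp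
        rw [this, map_smul]; simp)
  have hB : ∀ x y, B x y = (τ ((x : A) * y)).re := fun x y => rfl
  have hBs : LinearMap.IsSymm B := ⟨fun x y => by simp [hB, hτ (x : A)]⟩
  obtain ⟨b₀, hb₀⟩ := LinearMap.BilinForm.exists_orthogonal_basis hBs
  let b := b₀.reindex (finCongr hN)
  have hb : ∀ i j, i ≠ j → B (b i) (b j) = 0 := by
    intro i j hij
    simp only [b, Module.Basis.reindex_apply]
    exact hb₀ (by simpa using hij)
  have hbb : ∀ i, B (b i) (b i) ≠ 0 := by
    intro i
    have h1 : (b i : A) ≠ 0 := by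
      simpa using b.ne_zero i
    have h2 := hpos _ h1
    rw [skewAdjoint.mem_iff.1 (b i).2] at h2
    simp only [neg_mul, map_neg, Complex.neg_re] at h2
    rw [hB]; linarith
  refine ⟨b, fun i j => ?_⟩
  let c : skewAdjoint A := ⟨(b i : A) * b j - b j * b i, by
    rw [skewAdjoint.mem_iff, star_sub, star_mul, star_mul, skewAdjoint.mem_iff.1 (b i).2,
      skewAdjoint.mem_iff.1 (b j).2]
    simp⟩
  have hrep : ∀ k, B c (b k) = b.repr c k * B (b k) (b k) := by
    intro k
    conv_lhs => rw [← b.sum_repr c]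
    rw [map_sum, LinearMap.sum_apply, Finset.sum_eq_single k]
    · simp
    · intro l _ hl
      simp [hb l k hl]
    · simp
  have hci : b.repr c i = 0 := by
    have h1 : B c (b i) = 0 := by
      rw [hB]
      simp only [c, sub_mul, map_sub]
      rw [mul_assoc (b i : A), hτ (b i : A)]
      simp
    exact (mul_eq_zero.1 ((hrep i).symm.trans h1)).resolve_right (hbb i)
  have hcj : b.repr c j = 0 := by
    have h1 : B c (b j) = 0 := by
      rw [hB]
      simp only [c, sub_mul, map_sub]
      rw [mul_assoc (b j : A), hτ (b j : A)]
      simp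
    exact (mul_eq_zero.1 ((hrep j).symm.trans h1)).resolve_right (hbb j)
  have hc : (c : A) = ∑ k, b.repr c k • (b k : A) := by
    have h := congrArg (skewAdjoint A).subtype (b.sum_repr c).symm
    rw [map_sum] at h
    exact h
  change (c : A) ∈ _
  rw [hc]
  refine Submodule.sum_mem _ fun k _ => ?_
  by_cases hki : k = i
  · rw [hki, hci, zero_smul]; exact Submodule.zero_mem _
  by_cases hkj : k = j
  · rw [hkj, hcj, zero_smul]; exact Submodule.zero_mem _
  exact Submodule.smul_mem _ _ (Submodule.subset_span ⟨k, ⟨hki, hkj⟩, rfl⟩)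

theorem GR.exists_D {A : Type*} [CStarAlgebra A] {N : ℕ} [FiniteDimensional ℝ A]
    (b : Module.Basis (Fin N) ℝ (skewAdjoint A)) :
    ∃ D : A [⋀^Fin N]→L[ℝ] ℝ, ∀ T : skewAdjoint A →ₗ[ℝ] skewAdjoint A,
      D (fun j => (T (b j) : A)) = LinearMap.det T := by
  let P : A →ₗ[ℝ] skewAdjoint A := skewAdjointPart ℝ
  have hP : ∀ x : skewAdjoint A, P x = x := by
    intro x
    ext
    simp [P, skewAdjointPart_apply_coe, skewAdjoint.mem_iff.1 x.2, ← two_smul ℝ (x : A), smul_smul]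
  let D₀ : A [⋀^Fin N]→ₗ[ℝ] ℝ := b.det.compLinearMap P
  have hcont : Continuous D₀ := by
    have : (D₀ : (Fin N → A) → ℝ) = fun v => (Matrix.of fun i j => b.equivFun (P (v j)) i).det := by
      funext v
      simp only [D₀, AlternatingMap.compLinearMap_apply, Module.Basis.det_apply]
      rfl
    rw [this]
    apply Continuous.matrix_det
    apply continuous_matrix
    intro i j
    have h1 : Continuous ((b.equivFun.toLinearMap ∘ₗ P : A →ₗ[ℝ] _)) :=
      LinearMap.continuous_of_finiteDimensional _
    exact (continuous_apply i).comp (h1.comp (continuous_apply j))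
  refine ⟨{ D₀ with cont := hcont }, fun T => ?_⟩
  change b.det (fun j => P (T (b j))) = _
  simp only [hP]
  have := b.det_comp T b
  rw [b.det_self, mul_one] at this
  exact this

/-- conjugation -/
noncomputable def GR.conj {A : Type*} [CStarAlgebra A] (u : A) :
    skewAdjoint A →ₗ[ℝ] skewAdjoint A where
  toFun x := ⟨u * x * star u, by
    rw [skewAdjoint.mem_iff]
    simp [skewAdjoint.mem_iff.1 x.2, mul_assoc]⟩
  map_add' x y := by ext; simp [mul_add, add_mul]
  map_smul' c x := by ext; simp

theorem GR.conj_pow {A : Type*} [CStarAlgebra A] (u : A) (i : ℕ) (x : skewAdjoint A) :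
    ((GR.conj u ^ i) x : A) = u ^ i * x * star u ^ i := by
  induction i generalizing x with
  | zero => simp
  | succ i ih =>
    rw [pow_succ, Module.End.mul_apply, ih, pow_succ u, pow_succ' (star u)]
    simp [GR.conj, mul_assoc]

theorem GR.deriv_pow {A : Type*} [CStarAlgebra A] (u : A) (hu : u ∈ unitary A)
    (x : skewAdjoint A) (c : ℝ → A) (hc : HasDerivAt c (x * u) 0) (hc0 : c 0 = u) (k : ℕ) :
    HasDerivAt (fun s => c s ^ k)
      ((((∑ i ∈ Finset.range k, GR.conj u ^ i) x : skewAdjoint A) : A) * u ^ k) 0 := by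
  induction k with
  | zero => simpa using hasDerivAt_const (0:ℝ) (1 : A)
  | succ k ih =>
    have := ih.fun_mul hc
    simp only [pow_succ]
    convert this using 1
    rw [hc0, Finset.sum_range_succ, LinearMap.add_apply, AddSubgroup.coe_add, GR.conj_pow]
    have h1 : star u ^ k * u ^ k = 1 := by
      rw [← star_pow]; exact Unitary.star_mul_self_of_mem (pow_mem hu k)
    rw [add_mul, ← mul_assoc, ← mul_assoc (_ * _) (u ^ k) u]
    rw [mul_assoc (_ * _) (star u ^ k) (u ^ k), h1]
    simp [mul_assoc]

theorem GR.core {A : Type*} [CStarAlgebra A] [FiniteDimensional ℝ A] [Nontrivial A]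
    (τ : A →ₗ[ℂ] ℂ) (hτ : ∀ a b, τ (a * b) = τ (b * a))
    (hpos : ∀ a, a ≠ 0 → 0 < (τ (star a * a)).re)
    (F : ℝ × A → A) (hF : ContDiff ℝ 2 F)
    (hFU : ∀ t, ∀ u ∈ unitary A, F (t, u) ∈ unitary A) (k : ℕ) (hk : 0 < k)
    (hF0 : ∀ u ∈ unitary A, F (0, u) = u ^ k) : ∃ u ∈ unitary A, F (1, u) = 1 := by
  have : ProperSpace A := FiniteDimensional.proper ℝ A
  have hUc : IsCompact (unitary A : Set A) := by
    refine Metric.isCompact_of_isClosed_isBounded isClosed_unitary ?_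
    refine isBounded_iff_forall_norm_le.2 ⟨1, fun u hu => (CStarRing.norm_of_mem_unitary hu).le⟩
  have : CompactSpace (unitary A) := isCompact_iff_compactSpace.1 hUc
  let _ : MeasurableSpace (unitary A) := borel _
  have : BorelSpace (unitary A) := ⟨rfl⟩
  let μ : Measure (unitary A) := Measure.haar
  have hfd : FiniteDimensional ℝ (skewAdjoint A) :=
    Module.Finite.of_injective (skewAdjoint.submodule ℝ A).subtype Subtype.val_injective
  obtain ⟨N, hN⟩ : ∃ N, Module.finrank ℝ (skewAdjoint A) = N + 1 := by
    refine Nat.exists_eq_succ_of_ne_zero fun h0 => ?_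
    have := Module.finrank_zero_iff.1 h0
    have hI : (Complex.I • (1 : A)) ∈ skewAdjoint A := by
      rw [skewAdjoint.mem_iff]; simp
    have h1 : (⟨_, hI⟩ : skewAdjoint A) = 0 := Subsingleton.elim _ _
    have h2 := congrArg Subtype.val h1
    simp at h2
  obtain ⟨b, hb⟩ := GR.exists_basis τ hτ hpos hN
  obtain ⟨D, hD⟩ := GR.exists_D b
  by_contra hne
  push Not at hne
  have hSc : IsCompact ((fun u => F (1, u)) '' (unitary A : Set A)) :=
    hUc.image (hF.continuous.comp (Continuous.prodMk_right 1))
  have h1S : (1 : A) ∈ ((fun u => F (1, u)) '' (unitary A : Set A))ᶜ := by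
    rintro ⟨u, hu, h⟩
    exact hne u hu h
  obtain ⟨r, hr, hball⟩ := Metric.isOpen_iff.1 hSc.isClosed.isOpen_compl 1 h1S
  let φ : ContDiffBump (1 : A) := ⟨r / 2, r, by linarith, by linarith⟩
  have hφ : ContDiff ℝ 1 φ := φ.contDiff
  have hconst := GR.integral_const hN (fun i => (b i : A)) (fun i => (b i).2) hb D φ hφ F hF hFU μ 0 1
  have hone : ∫ u : unitary A, φ (F (1, u)) *
      D (fun j => fderiv ℝ F (1, u) (0, (b j : A) * u) * star (F (1, u))) ∂μ = 0 := by
    have : ∀ u : unitary A, φ (F (1, u)) = 0 := by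
      intro u
      refine φ.zero_of_le_dist ?_
      by_contra hlt
      push Not at hlt
      exact hball (show F (1, (u : A)) ∈ Metric.ball 1 r from hlt) ⟨u, u.2, rfl⟩
    simp [this]
  have hval : ∀ u : unitary A, D (fun j => fderiv ℝ F (0, u) (0, (b j : A) * u) * star (F (0, u)))
      = LinearMap.det (∑ i ∈ Finset.range k, GR.conj (u : A) ^ i) := by
    intro u
    rw [← hD]
    congr 1
    funext j
    have hFd : HasFDerivAt F (fderiv ℝ F (0, (u : A))) (0, (u : A)) :=
      (hF.differentiable two_ne_zero _).hasFDerivAt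
    have hc : HasDerivAt (fun s : ℝ => NormedSpace.exp (s • (b j : A)) * u) ((b j : A) * u) 0 := by
      simpa using (GR.exp_hasDerivAt (b j : A) 0).mul_const (u : A)
    have h1 : HasDerivAt (fun s : ℝ => ((0 : ℝ), NormedSpace.exp (s • (b j : A)) * u))
        ((0 : ℝ), (b j : A) * u) 0 := (hasDerivAt_const _ (0 : ℝ)).prodMk hc
    have hFd' : HasFDerivAt F (fderiv ℝ F (0, (u : A)))
        (0, NormedSpace.exp ((0:ℝ) • (b j : A)) * u) := by
      simpa using hFd
    have h2 := hFd'.comp_hasDerivAt (0 : ℝ) h1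
    have h3 := GR.deriv_pow (u : A) u.2 (b j) _ hc (by simp) k
    have h4 : (F ∘ fun s : ℝ => ((0 : ℝ), NormedSpace.exp (s • (b j : A)) * u)) =
        fun s => (NormedSpace.exp (s • (b j : A)) * u) ^ k := by
      funext s
      exact hF0 _ (mul_mem (GR.exp_unitary (b j).2 s) u.2)
    rw [h4] at h2
    rw [h2.unique h3, hF0 _ u.2, mul_assoc, Unitary.mul_star_self_of_mem (pow_mem u.2 k), mul_one]
  have hnn : ∀ u : unitary A, 0 ≤ φ (F (0, u)) *
      D (fun j => fderiv ℝ F (0, u) (0, (b j : A) * u) * star (F (0, u))) := by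
    intro u
    refine mul_nonneg φ.nonneg ?_
    rw [hval]
    let _ : NormedAddCommGroup (skewAdjoint A) := inferInstance
    let _ : NormedSpace ℝ (skewAdjoint A) :=
      inferInstanceAs (NormedSpace ℝ (skewAdjoint.submodule ℝ A))
    refine GR.det_nonneg (V := skewAdjoint A) _ ?_ k
    intro x
    change ‖(u : A) * x * star (u : A)‖ = ‖(x : A)‖
    rw [CStarRing.norm_mul_mem_unitary _ (Unitary.star_mem u.2),
      CStarRing.norm_mem_unitary_mul _ u.2]
  have hcont : Continuous fun u : unitary A => φ (F (0, u)) *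
      D (fun j => fderiv ℝ F (0, u) (0, (b j : A) * u) * star (F (0, u))) := by
    have h1 := GR.contDiff_aux D φ hφ F hF (fun j => GR.frame (fun i => (b i : A)) j.succ)
      (fun j => GR.frame_contDiff _ _)
    exact h1.continuous.comp (continuous_const.prodMk continuous_subtype_val)
  have hat1 : 0 < φ (F (0, (1 : unitary A))) *
      D (fun j => fderiv ℝ F (0, (1 : unitary A)) (0, (b j : A) * (1 : unitary A)) *
        star (F (0, (1 : unitary A)))) := by
    rw [hval, hF0 _ (1 : unitary A).2]
    have h1 : GR.conj ((1 : unitary A) : A) = 1 := by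
      ext x; simp [GR.conj]
    rw [h1]
    simp only [one_pow, Finset.sum_const, Finset.card_range]
    refine mul_pos ?_ ?_
    · refine φ.pos_of_mem_ball ?_
      have := Metric.mem_ball_self (x := (1 : A)) hr
      simpa using this
    · rw [← Nat.cast_smul_eq_nsmul ℝ, LinearMap.det_smul, map_one, mul_one]
      positivity
  have hpos' := hcont.integral_pos_of_hasCompactSupport_nonneg_nonzero (μ := μ)
    (HasCompactSupport.of_compactSpace _) hnn hat1.ne'
  rw [hconst, hone] at hpos'
  exact lt_irrefl _ hpos'

theorem GR.exists_family {A : Type*} [CStarAlgebra A] (hfin : ∀ a : A, (spectrum ℂ a).Finite)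
    (w : Monoid.Coprod (unitary A) (FreeGroup Unit)) :
    ∃ F : ℝ × A → A, ContDiff ℝ 2 F ∧ (∀ t, ∀ u ∈ unitary A, F (t, u) ∈ unitary A) ∧
      (∀ u : unitary A, F (1, u) = (Monoid.Coprod.lift (MonoidHom.id (unitary A))
        (FreeGroup.lift fun _ => u) w : unitary A)) ∧
      (∀ u : unitary A, F (0, u) = (FreeGroup.lift (fun _ => u)
        (Monoid.Coprod.lift (1 : unitary A →* FreeGroup Unit)
          (MonoidHom.id (FreeGroup Unit)) w) : unitary A)) := by
  have hstar : ContDiff ℝ 2 (star : A → A) := (starL' ℝ (A := A)).contDiff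
  induction w using Monoid.Coprod.induction_on with
  | inl g =>
    obtain ⟨c, hc, hcu, hc0, hc1⟩ := GR.exists_path hfin g
    refine ⟨fun x => c x.1, hc.comp contDiff_fst, fun t u _ => hcu t, ?_, ?_⟩
    · intro u; simpa using hc1
    · intro u; simpa using hc0
  | inr x =>
    simp only [Monoid.Coprod.lift_apply_inr, MonoidHom.id_apply]
    induction x using FreeGroup.induction_on with
    | C1 => exact ⟨fun _ => 1, contDiff_const, fun _ _ _ => one_mem _, by simp, by simp⟩
    | of i => exact ⟨fun x => x.2, contDiff_snd, fun _ _ h => h, by simp, by simp⟩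
    | inv_of i _ =>
      exact ⟨fun x => star x.2, hstar.comp contDiff_snd, fun _ _ h => Unitary.star_mem h,
        fun u => by rw [map_inv, FreeGroup.lift_apply_of]; rfl,
        fun u => by rw [map_inv, FreeGroup.lift_apply_of]; rfl⟩
    | mul x y hx hy =>
      obtain ⟨F, h1, h2, h3, h4⟩ := hx
      obtain ⟨F', h1', h2', h3', h4'⟩ := hy
      exact ⟨fun x => F x * F' x, h1.mul h1', fun t u hu => mul_mem (h2 t u hu) (h2' t u hu),
        fun u => by simp [h3, h3'], fun u => by simp [h4, h4']⟩
  | mul x y hx hy =>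
    obtain ⟨F, h1, h2, h3, h4⟩ := hx
    obtain ⟨F', h1', h2', h3', h4'⟩ := hy
    exact ⟨fun x => F x * F' x, h1.mul h1', fun t u hu => mul_mem (h2 t u hu) (h2' t u hu),
      fun u => by simp [h3, h3'], fun u => by simp [h4, h4']⟩

theorem GR.freeGroup_unit (x : FreeGroup Unit) : ∃ k : ℤ, x = FreeGroup.of () ^ k := by
  induction x using FreeGroup.induction_on with
  | C1 => exact ⟨0, by simp⟩
  | of i => exact ⟨1, by simp⟩
  | inv_of i _ => exact ⟨-1, by simp⟩
  | mul x y hx hy =>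
    obtain ⟨a, rfl⟩ := hx
    obtain ⟨b, rfl⟩ := hy
    exact ⟨a + b, by rw [zpow_add]⟩

theorem GR.main {A : Type*} [CStarAlgebra A] [FiniteDimensional ℂ A] [Nontrivial A]
    (hfin : ∀ a : A, (spectrum ℂ a).Finite)
    (τ : A →ₗ[ℂ] ℂ) (hτ : ∀ a b, τ (a * b) = τ (b * a))
    (hpos : ∀ a, a ≠ 0 → 0 < (τ (star a * a)).re)
    (w : Monoid.Coprod (unitary A) (FreeGroup Unit))
    (hw : Monoid.Coprod.lift (1 : unitary A →* FreeGroup Unit)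
        (MonoidHom.id (FreeGroup Unit)) w ≠ 1) :
    ∃ u : unitary A, Monoid.Coprod.lift (MonoidHom.id (unitary A))
        (FreeGroup.lift fun _ => u) w = 1 := by
  have key : ∀ w : Monoid.Coprod (unitary A) (FreeGroup Unit), ∀ k : ℕ, 0 < k →
      Monoid.Coprod.lift (1 : unitary A →* FreeGroup Unit)
        (MonoidHom.id (FreeGroup Unit)) w = FreeGroup.of () ^ k →
      ∃ u : unitary A, Monoid.Coprod.lift (MonoidHom.id (unitary A))
        (FreeGroup.lift fun _ => u) w = 1 := by
    intro w k hk hwk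
    obtain ⟨F, h1, h2, h3, h4⟩ := GR.exists_family hfin w
    have : FiniteDimensional ℝ A := FiniteDimensional.complexToReal A
    obtain ⟨u, hu, h5⟩ := GR.core τ hτ hpos F h1 h2 k hk (by
      intro u hu
      have := h4 ⟨u, hu⟩
      rw [hwk] at this
      simpa using this)
    refine ⟨⟨u, hu⟩, ?_⟩
    ext
    rw [← h3]
    simpa using h5
  obtain ⟨k, hk⟩ := GR.freeGroup_unit (Monoid.Coprod.lift (1 : unitary A →* FreeGroup Unit)
        (MonoidHom.id (FreeGroup Unit)) w)
  rcases lt_trichotomy k 0 with h | h | h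
  · obtain ⟨u, hu⟩ := key w⁻¹ k.natAbs (by omega) (by
      rw [map_inv, hk, ← zpow_natCast, ← zpow_neg]
      congr 1
      omega)
    exact ⟨u, by rwa [map_inv, inv_eq_one] at hu⟩
  · exact absurd (by rw [hk, h, zpow_zero]) hw
  · exact key w k.natAbs (by omega) (by
      rw [hk, ← zpow_natCast]
      congr 1
      omega)

/-- **Theorem (Gerstenhaber–Rothaus).** Every non-singular one-variable equation with
coefficients in the unitary group `U(n)` (`n ≥ 1`), i.e. a word
`w ∈ U(n) ∗ F₁` whose content in `F₁ ≅ ℤ` is nonzero, can be solved in `U(n)`. -/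
theorem nonsingular_one_variable_equation_solvable_in_U
    (n : ℕ) (hn : 1 ≤ n)
    (w : Monoid.Coprod (Matrix.unitaryGroup (Fin n) ℂ) (FreeGroup Unit))
    (hw : Monoid.Coprod.lift (1 : Matrix.unitaryGroup (Fin n) ℂ →* FreeGroup Unit)
        (MonoidHom.id (FreeGroup Unit)) w ≠ 1) :
    ∃ u : Matrix.unitaryGroup (Fin n) ℂ,
      Monoid.Coprod.lift (MonoidHom.id (Matrix.unitaryGroup (Fin n) ℂ))
        (FreeGroup.lift fun _ => u) w = 1 := by
  open scoped Matrix.Norms.L2Operator in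
  have : Nonempty (Fin n) := ⟨⟨0, hn⟩⟩
  open scoped Matrix.Norms.L2Operator in
  exact GR.main (A := Matrix (Fin n) (Fin n) ℂ) (fun a => Matrix.finite_spectrum a)
    (Matrix.traceLinearMap (Fin n) ℂ ℂ) (fun a b => by simpa using Matrix.trace_mul_comm a b)
    (by
      intro a ha
      have h1 : Matrix.trace (star a * a) = ((∑ i, ∑ j, ‖a j i‖ ^ 2 : ℝ) : ℂ) := by
        simp only [Matrix.trace, Matrix.diag, Matrix.mul_apply, Matrix.star_apply]
        push_cast
        refine Finset.sum_congr rfl fun i _ => Finset.sum_congr rfl fun j _ => ?_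
        exact Complex.conj_mul' _
      rw [Matrix.traceLinearMap_apply, h1, Complex.ofReal_re]
      obtain ⟨j, i, hij⟩ : ∃ j i, a j i ≠ 0 := by
        by_contra hcon
        push Not at hcon
        exact ha (by ext j i; simpa using hcon j i)
      refine Finset.sum_pos' (fun i _ => Finset.sum_nonneg fun j _ => by positivity)
        ⟨i, Finset.mem_univ _, ?_⟩
      refine Finset.sum_pos' (fun j _ => by positivity) ⟨j, Finset.mem_univ _, ?_⟩
      have := norm_pos_iff.2 hij
      positivity) w hw
end

section
/- For every n ≥ 1, the fundamental group of PU(n), the quotient topological group of SU(n) by its center (with the quotient topology), based at the identity coset, is isomorphic to the cyclic group ℤ/nℤ. -/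
/-- The special unitary group `SU(n)`: the subgroup of the unitary group
`U(n) = Matrix.unitaryGroup (Fin n) ℂ` consisting of matrices of determinant `1`. -/
def SU (n : ℕ) : Subgroup (Matrix.unitaryGroup (Fin n) ℂ) where
  carrier := {A | (A : Matrix (Fin n) (Fin n) ℂ).det = 1}
  mul_mem' := by
    intro a b ha hb
    simp only [Set.mem_setOf_eq] at *
    simp [Matrix.UnitaryGroup.mul_val, Matrix.det_mul, ha, hb]
  one_mem' := by simp
  inv_mem' := by
    intro a ha
    simp only [Set.mem_setOf_eq] at *
    show ((a⁻¹ : Matrix.unitaryGroup (Fin n) ℂ) : Matrix (Fin n) (Fin n) ℂ).det = 1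
    rw [Matrix.UnitaryGroup.inv_val, Matrix.star_eq_conjTranspose, Matrix.det_conjTranspose, ha]
    simp

/-- The projective unitary group `PU(n)`: the quotient of `SU(n)` by its center,
with the quotient topology. -/
abbrev PU (n : ℕ) := SU n ⧸ Subgroup.center (SU n)

section
open Set unitInterval

theorem IsSimplyConnected.homotopic_of_mem {X : Type*} [TopologicalSpace X] {s : Set X}
    (hs : IsSimplyConnected s) {x y : X} (p q : Path x y) (hp : ∀ t, p t ∈ s)
    (hq : ∀ t, q t ∈ s) : p.Homotopic q := by
  have := hs.simplyConnectedSpace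
  have hx : x ∈ s := by simpa using hp 0
  have hy : y ∈ s := by simpa using hp 1
  let p' : Path (⟨x, hx⟩ : s) ⟨y, hy⟩ :=
    { toFun := fun t => ⟨p t, hp t⟩, source' := by simp, target' := by simp }
  let q' : Path (⟨x, hx⟩ : s) ⟨y, hy⟩ :=
    { toFun := fun t => ⟨q t, hq t⟩, source' := by simp, target' := by simp }
  have h := SimplyConnectedSpace.paths_homotopic p' q'
  exact h.map ⟨Subtype.val, continuous_subtype_val⟩

/-- The simply connected case of the Seifert-van Kampen theorem. -/
theorem simplyConnectedSpace_of_cover {X : Type*} [TopologicalSpace X] {U V : Set X}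
    (hUo : IsOpen U) (hVo : IsOpen V) (hUV : U ∪ V = univ) (hU : IsSimplyConnected U)
    (hV : IsSimplyConnected V) (hI : IsPathConnected (U ∩ V)) : SimplyConnectedSpace X := by
  obtain ⟨x₀, hx₀⟩ := hI.nonempty
  have hc : ∀ x, ∃ c : Path x₀ x, (x ∈ U → ∀ t, c t ∈ U) ∧ (x ∈ V → ∀ t, c t ∈ V) := by
    intro x
    by_cases hxU : x ∈ U <;> by_cases hxV : x ∈ V
    · obtain ⟨c, h⟩ := hI.joinedIn x₀ hx₀ x ⟨hxU, hxV⟩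
      exact ⟨c, fun _ t => (h t).1, fun _ t => (h t).2⟩
    · obtain ⟨c, h⟩ := hU.isPathConnected.joinedIn x₀ hx₀.1 x hxU
      exact ⟨c, fun _ t => (h t), fun h => (hxV h).elim⟩
    · obtain ⟨c, h⟩ := hV.isPathConnected.joinedIn x₀ hx₀.2 x hxV
      exact ⟨c, fun h => (hxU h).elim, fun _ t => (h t)⟩
    · exact absurd (hUV ▸ mem_univ x : x ∈ U ∪ V) (by simp [hxU, hxV])
  choose c hcU hcV using hc
  have trans_mem : ∀ {x y z : X} (p : Path x y) (q : Path y z) (s : Set X), (∀ t, p t ∈ s) →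
      (∀ t, q t ∈ s) → ∀ t, p.trans q t ∈ s := by
    intro x y z p q s hp hq t
    rw [Path.trans_apply]
    split_ifs
    · exact hp _
    · exact hq _
  have small : ∀ {x y : X} (p : Path x y), ((∀ t, p t ∈ U) ∨ (∀ t, p t ∈ V)) →
      ((c x).trans p).Homotopic (c y) := by
    intro x y p hp
    rcases hp with hp | hp
    · have hx : x ∈ U := by simpa using hp 0
      have hy : y ∈ U := by simpa using hp 1
      exact hU.homotopic_of_mem _ _ (trans_mem _ _ _ (hcU x hx) hp) (hcU y hy)
    · have hx : x ∈ V := by simpa using hp 0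
      have hy : y ∈ V := by simpa using hp 1
      exact hV.homotopic_of_mem _ _ (trans_mem _ _ _ (hcV x hx) hp) (hcV y hy)
  have cast_aux : ∀ {x y x' y' : X} (hx : x' = x) (hy : y' = y) (p : Path x y),
      ((c x').trans (p.cast hx hy)).Homotopic (c y') → ((c x).trans p).Homotopic (c y) := by
    intro x y x' y' hx hy p h
    subst hx hy
    exact h
  have all : ∀ {x y : X} (p : Path x y), ((c x).trans p).Homotopic (c y) := by
    intro x y p
    obtain ⟨t, ht0, htm, ⟨n, hn⟩, ht⟩ := exists_monotone_Icc_subset_open_cover_unitInterval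
      (c := fun b : Bool => if b then p ⁻¹' U else p ⁻¹' V)
      (by rintro (_ | _) <;> simp [hUo.preimage p.continuous, hVo.preimage p.continuous])
      (by
        intro s _
        have : p s ∈ U ∪ V := hUV ▸ mem_univ _
        simpa [or_comm] using this)
    have key : ∀ k, ((c (p (t 0))).trans (p.subpath (t 0) (t k))).Homotopic (c (p (t k))) := by
      intro k
      induction k with
      | zero => rw [Path.subpath_self]; exact ⟨Path.Homotopy.transRefl _⟩
      | succ k ih =>
        have h1 : (p.subpath (t 0) (t (k+1))).Homotopic
            ((p.subpath (t 0) (t k)).trans (p.subpath (t k) (t (k+1)))) :=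
          Path.Homotopic.symm ⟨Path.Homotopy.subpathTransSubpath p _ _ _⟩
        have h2 := (Path.Homotopic.refl (c (p (t 0)))).hcomp h1
        have h3 : Path.Homotopic ((c (p (t 0))).trans
            ((p.subpath (t 0) (t k)).trans (p.subpath (t k) (t (k+1))))) _ :=
          Path.Homotopic.symm ⟨Path.Homotopy.transAssoc _ _ _⟩
        have h4 := ih.hcomp (Path.Homotopic.refl (p.subpath (t k) (t (k+1))))
        refine h2.trans (h3.trans (h4.trans (small _ ?_)))
        obtain ⟨b, hb⟩ := ht k
        have hr := p.range_subpath_of_le _ _ (htm (Nat.le_succ k))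
        have : ∀ s, p.subpath (t k) (t (k+1)) s ∈ p '' (Icc (t k) (t (k+1))) := fun s =>
          hr ▸ mem_range_self s
        cases b
        · right
          intro s
          obtain ⟨u, hu, hu'⟩ := this s
          rw [← hu']; simpa using hb hu
        · left
          intro s
          obtain ⟨u, hu, hu'⟩ := this s
          rw [← hu']; simpa using hb hu
    have := key n
    rw [ht0, hn n le_rfl, Path.subpath_zero_one] at this
    exact cast_aux p.source p.target p this
  rw [simply_connected_iff_paths_homotopic']
  refine ⟨⟨⟨x₀⟩, fun x y => ⟨(c x).symm.trans (c y)⟩⟩, ?_⟩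
  intro x y p q
  have h := (all p).trans (all q).symm
  rw [← Path.Homotopic.Quotient.eq] at h ⊢
  simp only [Path.Homotopic.Quotient.mk_trans] at h
  have := congrArg (fun z => (Path.Homotopic.Quotient.symm (.mk (c x))).trans z) h
  simpa [← Path.Homotopic.Quotient.trans_assoc] using this
end

section
open Set unitInterval Matrix
set_option linter.unusedSectionVars false
set_option linter.unusedSimpArgs false

/-- A unitary generalized Householder matrix sending the basis vector `e i₀` to `x`. -/
noncomputable def houseMat {ι : Type*} [Fintype ι] [DecidableEq ι] (i₀ : ι) (x : ι → ℂ) : Matrix ι ι ℂ :=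
  1 - (1 - star (x i₀))⁻¹ • vecMulVec (Pi.single i₀ 1 - x) (star (Pi.single i₀ 1 - x))

theorem houseMat_mem {ι : Type*} [Fintype ι] [DecidableEq ι] (i₀ : ι) (x : ι → ℂ)
    (hx : star x ⬝ᵥ x = 1) (h1 : x i₀ ≠ 1) : houseMat i₀ x ∈ unitaryGroup ι ℂ := by
  rw [mem_unitaryGroup_iff]
  have ha : (1 - x i₀) ≠ 0 := sub_ne_zero.mpr h1.symm
  have ha' : (1 - star (x i₀)) ≠ 0 := by
    intro h; apply ha; have := congrArg star h; simpa using this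
  set u : ι → ℂ := Pi.single i₀ 1 - x with hu
  have huu : star u ⬝ᵥ u = (1 - x i₀) + (1 - star (x i₀)) := by
    rw [hu, star_sub, sub_dotProduct, dotProduct_sub, dotProduct_sub, hx, ← Pi.single_star]
    simp
    ring
  have hst : star (vecMulVec u (star u)) = vecMulVec u (star u) := by
    rw [star_eq_conjTranspose, conjTranspose_vecMulVec, star_star]
  have hmul : vecMulVec u (star u) * vecMulVec u (star u) =
      ((1 - x i₀) + (1 - star (x i₀))) • vecMulVec u (star u) := by
    rw [vecMulVec_mul_vecMulVec, huu]
    ext i j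
    simp [vecMulVec_apply]
    ring
  rw [houseMat, ← hu, star_sub (1 : Matrix ι ι ℂ), star_one, star_smul, hst, sub_mul, mul_sub, mul_sub]
  simp only [one_mul, mul_one, smul_mul_assoc, mul_smul_comm, hmul, smul_smul]
  generalize vecMulVec u (star u) = M
  have : (1 - star (x i₀))⁻¹ * (star (1 - star (x i₀))⁻¹ * (1 - x i₀ + (1 - star (x i₀))))
     = (1 - star (x i₀))⁻¹ + star (1 - star (x i₀))⁻¹ := by
    rw [star_inv₀, star_sub, star_star, star_one]
    field_simp
  rw [mul_left_comm, this, add_smul]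
  abel

theorem houseMat_col {ι : Type*} [Fintype ι] [DecidableEq ι] (i₀ : ι) (x : ι → ℂ)
    (h1 : x i₀ ≠ 1) (i : ι) : houseMat i₀ x i i₀ = x i := by
  have ha : (1 - x i₀) ≠ 0 := sub_ne_zero.mpr h1.symm
  have ha' : (1 - star (x i₀)) ≠ 0 := by
    intro h; apply ha; have := congrArg star h; simpa using this
  simp only [houseMat, Matrix.sub_apply, Matrix.smul_apply, vecMulVec_apply, Pi.star_apply, Pi.sub_apply, star_sub, Pi.single_eq_same, star_one, one_apply, smul_eq_mul, Pi.single_apply]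
  field_simp
  ring

theorem houseMat_continuous {ι A : Type*} [Fintype ι] [DecidableEq ι] [TopologicalSpace A] (i₀ : ι)
    (f : A → ι → ℂ) (hf : Continuous f) (h1 : ∀ a, f a i₀ ≠ 1) :
    Continuous (fun a => houseMat i₀ (f a)) := by
  unfold houseMat
  refine continuous_const.sub (Continuous.fun_smul ?_ ?_)
  · refine Continuous.inv₀ (by fun_prop) ?_
    intro a h
    apply sub_ne_zero.mpr (h1 a).symm; have := congrArg star h; simpa using this
  · exact Continuous.matrix_vecMulVec (by fun_prop) (by fun_prop)

section
variable {κ : Type*} [Fintype κ] [DecidableEq κ]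

/-- block sum `1 ⊕ B`. -/
def blk (B : Matrix κ κ ℂ) : Matrix (Unit ⊕ κ) (Unit ⊕ κ) ℂ := fromBlocks 1 0 0 B

theorem blk_mul (A B : Matrix κ κ ℂ) : blk A * blk B = blk (A * B) := by
  simp [blk, fromBlocks_multiply]

theorem blk_one : blk (1 : Matrix κ κ ℂ) = 1 := by simp [blk]

theorem blk_star (A : Matrix κ κ ℂ) : star (blk A) = blk (star A) := by
  simp [blk, star_eq_conjTranspose, fromBlocks_conjTranspose]

theorem blk_det (A : Matrix κ κ ℂ) : (blk A).det = A.det := by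
  simp [blk]

theorem blk_inj {A B : Matrix κ κ ℂ} (h : blk A = blk B) : A = B := by
  have := congrArg toBlocks₂₂ h
  simpa [blk] using this

theorem blk_mem_unitary {A : Matrix κ κ ℂ} : blk A ∈ unitaryGroup _ ℂ ↔ A ∈ unitaryGroup κ ℂ := by
  rw [mem_unitaryGroup_iff, mem_unitaryGroup_iff, blk_star, blk_mul, ← blk_one]
  exact ⟨blk_inj, fun h => by rw [h]⟩

theorem blk_mem_special {A : Matrix κ κ ℂ} :
    blk A ∈ specialUnitaryGroup _ ℂ ↔ A ∈ specialUnitaryGroup κ ℂ := by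
  rw [mem_specialUnitaryGroup_iff, mem_specialUnitaryGroup_iff, blk_mem_unitary, blk_det]

theorem mul_blk_col (A : Matrix (Unit ⊕ κ) (Unit ⊕ κ) ℂ) (B : Matrix κ κ ℂ) (i : Unit ⊕ κ) :
    (A * blk B) i (Sum.inl ()) = A i (Sum.inl ()) := by
  simp [Matrix.mul_apply, blk]

theorem eq_blk {A : Matrix (Unit ⊕ κ) (Unit ⊕ κ) ℂ} (hA : A ∈ unitaryGroup _ ℂ)
    (h : ∀ i, A i (Sum.inl ()) = (1 : Matrix (Unit ⊕ κ) (Unit ⊕ κ) ℂ) i (Sum.inl ())) :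
    A = blk A.toBlocks₂₂ := by
  have h2 := congrFun (congrFun ((mem_unitaryGroup_iff).1 hA) (Sum.inl ())) (Sum.inl ())
  have h0 : ∀ k, A (Sum.inl ()) (Sum.inr k) = 0 := by
    rw [Matrix.mul_apply] at h2
    simp only [Fintype.sum_sum_type, Finset.univ_unique, star_apply, Finset.sum_singleton] at h2
    rw [show (default : Unit) = () from rfl, h] at h2
    simp [Complex.mul_conj] at h2
    norm_cast at h2
    rw [Finset.sum_eq_zero_iff_of_nonneg (fun i _ => Complex.normSq_nonneg _)] at h2
    intro k
    simpa using h2 k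
  ext i j
  rcases i with i | i <;> rcases j with j | j
  · simp [blk, h]
  · simp [blk, h0]
  · simp [blk, h]
  · simp [blk, toBlocks₂₂]

end
end

section
open Set unitInterval Matrix
set_option linter.unusedSectionVars false
set_option linter.unusedSimpArgs false
section
variable {κ : Type*} [Fintype κ] [DecidableEq κ]

/-- Section of the first column map. -/
noncomputable def secMat (k₀ : κ) (x : Unit ⊕ κ → ℂ) : Matrix (Unit ⊕ κ) (Unit ⊕ κ) ℂ :=
  houseMat (Sum.inl ()) x * blk (diagonal (Pi.mulSingle k₀ (star (houseMat (Sum.inl ()) x).det)))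

theorem diagonal_mem_unitary {ι : Type*} [Fintype ι] [DecidableEq ι] (d : ι → ℂ)
    (hd : ∀ i, d i * star (d i) = 1) : diagonal d ∈ unitaryGroup ι ℂ := by
  rw [mem_unitaryGroup_iff, star_eq_conjTranspose, diagonal_conjTranspose, diagonal_mul_diagonal,
    ← diagonal_one]
  congr 1
  ext i
  exact hd i

theorem det_mul_star_of_mem {ι : Type*} [Fintype ι] [DecidableEq ι] {A : Matrix ι ι ℂ}
    (hA : A ∈ unitaryGroup ι ℂ) : A.det * star A.det = 1 := by
  have := congrArg det ((mem_unitaryGroup_iff).1 hA)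
  simpa [star_eq_conjTranspose, det_conjTranspose] using this

theorem secMat_mem (k₀ : κ) (x : Unit ⊕ κ → ℂ) (hx : star x ⬝ᵥ x = 1) (h1 : x (Sum.inl ()) ≠ 1) :
    secMat k₀ x ∈ specialUnitaryGroup (Unit ⊕ κ) ℂ := by
  have hH := houseMat_mem (Sum.inl ()) x hx h1
  have hd := det_mul_star_of_mem hH
  rw [mem_specialUnitaryGroup_iff]
  constructor
  · refine mul_mem hH (blk_mem_unitary.2 (diagonal_mem_unitary _ ?_))
    intro i
    by_cases h : i = k₀
    · subst h; simp only [Pi.mulSingle_eq_same, star_star]; rw [mul_comm]; exact hd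
    · simp [Pi.mulSingle_eq_of_ne h]
  · rw [secMat, det_mul, blk_det, det_diagonal, Finset.prod_pi_mulSingle']
    simpa using hd

theorem secMat_col (k₀ : κ) (x : Unit ⊕ κ → ℂ) (h1 : x (Sum.inl ()) ≠ 1) (i : Unit ⊕ κ) :
    secMat k₀ x i (Sum.inl ()) = x i := by
  rw [secMat, mul_blk_col, houseMat_col _ _ h1]

theorem blk_continuous {A : Type*} [TopologicalSpace A] {f : A → Matrix κ κ ℂ} (hf : Continuous f) :
    Continuous (fun a => blk (f a)) :=
  Continuous.matrix_fromBlocks continuous_const continuous_const continuous_const hf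

theorem secMat_continuous {A : Type*} [TopologicalSpace A] (k₀ : κ)
    (f : A → Unit ⊕ κ → ℂ) (hf : Continuous f) (h1 : ∀ a, f a (Sum.inl ()) ≠ 1) :
    Continuous (fun a => secMat k₀ (f a)) := by
  have hH := houseMat_continuous (Sum.inl ()) f hf h1
  unfold secMat
  refine hH.matrix_mul (blk_continuous (Continuous.matrix_diagonal ?_))
  exact (continuous_mulSingle k₀).comp (hH.matrix_det.star)

variable (κ) in
/-- Unit vectors other than the first basis vector. -/
abbrev PSph := {x : Unit ⊕ κ → ℂ // star x ⬝ᵥ x = 1 ∧ x (Sum.inl ()) ≠ 1}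

variable (κ) in
/-- The open set of matrices with upper left coefficient different from `1`. -/
abbrev USet : Set (specialUnitaryGroup (Unit ⊕ κ) ℂ) := {g | g.1 (Sum.inl ()) (Sum.inl ()) ≠ 1}

/-- The first column. -/
def colP (g : USet κ) : PSph κ := ⟨fun i => g.1.1 i (Sum.inl ()), by
  have h := ((mem_unitaryGroup_iff').1 (mem_specialUnitaryGroup_iff.1 g.1.2).1)
  have := congrFun (congrFun h (Sum.inl ())) (Sum.inl ())
  simpa [Matrix.mul_apply, dotProduct] using this, g.2⟩

/-- The section with values in the special unitary group. -/
noncomputable def secP (k₀ : κ) (x : PSph κ) : specialUnitaryGroup (Unit ⊕ κ) ℂ :=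
  ⟨secMat k₀ x.1, secMat_mem k₀ x.1 x.2.1 x.2.2⟩

theorem continuous_colP : Continuous (colP (κ := κ)) := by
  refine Continuous.subtype_mk ?_ _
  refine continuous_pi fun i => ?_
  exact (continuous_subtype_val.comp continuous_subtype_val).matrix_elem _ _

theorem continuous_secP (k₀ : κ) : Continuous (secP k₀) := by
  refine Continuous.subtype_mk ?_ _
  exact secMat_continuous k₀ _ continuous_subtype_val fun a => a.2.2

instance {ι : Type*} [Fintype ι] [DecidableEq ι] : ContinuousInv (specialUnitaryGroup ι ℂ) :=
  ⟨Continuous.subtype_mk (continuous_star.comp continuous_subtype_val) _⟩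

instance {ι : Type*} [Fintype ι] [DecidableEq ι] : IsTopologicalGroup (specialUnitaryGroup ι ℂ) where

theorem inv_mul_eq_blk (k₀ : κ) (g : USet κ) :
    ((secP k₀ (colP g))⁻¹ * g.1).1 = blk (((secP k₀ (colP g))⁻¹ * g.1).1.toBlocks₂₂) := by
  refine eq_blk (mem_specialUnitaryGroup_iff.1 (Subtype.property _)).1 ?_
  intro i
  have hs : ∀ i, (secP k₀ (colP g)).1 i (Sum.inl ()) = g.1.1 i (Sum.inl ()) := fun i =>
    secMat_col k₀ _ (colP g).2.2 i
  have h1 : ((secP k₀ (colP g))⁻¹ * (secP k₀ (colP g))).1 = 1 := by rw [inv_mul_cancel]; rfl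
  rw [← h1, Submonoid.coe_mul, Submonoid.coe_mul, Matrix.mul_apply, Matrix.mul_apply]
  simp only [hs]

/-- The trivialization of the first column map. -/
noncomputable def trivP (k₀ : κ) : USet κ ≃ₜ PSph κ × specialUnitaryGroup κ ℂ where
  toFun g := (colP g, ⟨((secP k₀ (colP g))⁻¹ * g.1).1.toBlocks₂₂, by
    rw [← blk_mem_special, ← inv_mul_eq_blk]; exact Subtype.property _⟩)
  invFun p := ⟨secP k₀ p.1 * ⟨blk p.2.1, blk_mem_special.2 p.2.2⟩, by
    show (secMat k₀ p.1.1 * blk p.2.1) _ _ ≠ 1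
    rw [mul_blk_col, secMat_col _ _ p.1.2.2]
    exact p.1.2.2⟩
  left_inv g := by
    apply Subtype.ext
    show secP k₀ (colP g) * ⟨blk (((secP k₀ (colP g))⁻¹ * g.1).1.toBlocks₂₂), _⟩ = g.1
    rw [← eq_inv_mul_iff_mul_eq]
    apply Subtype.ext
    exact (inv_mul_eq_blk k₀ g).symm
  right_inv p := by
    have hcol : ∀ h, colP ⟨secP k₀ p.1 * ⟨blk p.2.1, blk_mem_special.2 p.2.2⟩, h⟩ = p.1 := by
      intro h
      apply Subtype.ext
      funext i
      show (secMat k₀ p.1.1 * blk p.2.1) _ _ = _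
      rw [mul_blk_col, secMat_col _ _ p.1.2.2]
    refine Prod.ext (hcol _) ?_
    apply Subtype.ext
    simp only [hcol, inv_mul_cancel_left]
    simp [blk]
  continuous_toFun := by
    refine continuous_colP.prodMk (Continuous.subtype_mk ?_ _)
    have : Continuous fun g : USet κ => ((secP k₀ (colP g))⁻¹ * g.1).1 :=
      continuous_subtype_val.comp
        ((((continuous_secP k₀).comp continuous_colP).inv).mul continuous_subtype_val)
    refine continuous_matrix fun i j => ?_
    exact this.matrix_elem _ _
  continuous_invFun := by
    refine Continuous.subtype_mk (((continuous_secP k₀).comp continuous_fst).mul ?_) _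
    refine Continuous.subtype_mk ?_ _
    exact blk_continuous (continuous_subtype_val.comp continuous_snd)

end
end

section
open Set unitInterval Matrix
set_option linter.unusedSectionVars false
set_option linter.unusedSimpArgs false
section
variable {κ : Type*} [Fintype κ] [DecidableEq κ]

variable (κ) in
/-- The first basis vector. -/
noncomputable abbrev northP : EuclideanSpace ℂ (Unit ⊕ κ) := EuclideanSpace.single (Sum.inl ()) 1

variable (κ) in
theorem norm_northP : ‖northP κ‖ = 1 := by simp [northP]

theorem dot_eq_one_iff {ι : Type*} [Fintype ι] (x : ι → ℂ) :
    star x ⬝ᵥ x = 1 ↔ ‖WithLp.toLp 2 x‖ = 1 := by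
  have h : star x ⬝ᵥ x = ((‖WithLp.toLp 2 x‖ ^ 2 : ℝ) : ℂ) := by
    rw [EuclideanSpace.norm_sq_eq, dotProduct]
    push_cast
    refine Finset.sum_congr rfl fun i _ => ?_
    simpa using Complex.conj_mul' (x i)
  rw [h]
  norm_cast
  constructor
  · intro h
    nlinarith [norm_nonneg (WithLp.toLp 2 x)]
  · intro h
    simp [h]

/-- The point of the sphere. -/
noncomputable def toSph (x : PSph κ) : Metric.sphere (0 : EuclideanSpace ℂ (Unit ⊕ κ)) 1 :=
  ⟨WithLp.toLp 2 x.1, by simpa using (dot_eq_one_iff x.1).1 x.2.1⟩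

theorem eq_of_coord (v : EuclideanSpace ℂ (Unit ⊕ κ)) (hv : ‖v‖ = 1) (c : ℂ) (hc : ‖c‖ = 1) (h : v (Sum.inl ()) = c) :
    v = EuclideanSpace.single (Sum.inl ()) c := by
  have h2 := EuclideanSpace.norm_sq_eq v
  rw [hv, Fintype.sum_sum_type] at h2
  simp [h, hc] at h2
  rw [Finset.sum_eq_zero_iff_of_nonneg (fun _ _ => by positivity)] at h2
  ext i
  rcases i with i | i
  · simpa using h
  · simpa using h2 i

/-- Stereographic projection on `PSph`. -/
noncomputable def stereoP : PSph κ ≃ₜ (ℝ ∙ northP κ)ᗮ where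
  toFun x := stereographic (norm_northP κ) (toSph x)
  invFun w := ⟨((stereographic (norm_northP κ)).symm w).1.ofLp, by
    rw [dot_eq_one_iff]; simp, by
    intro h
    have h1 := eq_of_coord _ (by simp) 1 (by simp) h
    have h2 := (stereographic (norm_northP κ)).map_target (x := w) (by simp)
    rw [stereographic_source] at h2
    exact h2 (Subtype.ext h1)⟩
  left_inv x := by
    apply Subtype.ext
    dsimp only
    rw [OpenPartialHomeomorph.left_inv]
    · rfl
    · rw [stereographic_source]
      intro h
      apply x.2.2
      have := congrArg (fun v => v.1 (Sum.inl ())) (mem_singleton_iff.1 h)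
      simpa [toSph] using this
  right_inv w := by
    have := (stereographic (norm_northP κ)).right_inv (x := w) (by simp)
    exact this
  continuous_toFun := by
    refine (stereographic (norm_northP κ)).continuousOn.comp_continuous
      (f := toSph) ?_ ?_
    · refine Continuous.subtype_mk ?_ _
      exact (PiLp.continuous_toLp 2 _).comp continuous_subtype_val
    · intro x
      rw [stereographic_source]
      intro h
      apply x.2.2
      have := congrArg (fun v => v.1 (Sum.inl ())) (mem_singleton_iff.1 h)
      simpa [toSph] using this
  continuous_invFun := by
    refine Continuous.subtype_mk ?_ _
    refine (PiLp.continuous_ofLp 2 _).comp (continuous_subtype_val.comp ?_)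
    have := (stereographic (norm_northP κ)).continuousOn_symm
    simpa [continuousOn_univ] using this

theorem stereo_neg {E : Type*} [NormedAddCommGroup E] [InnerProductSpace ℝ E] (v : E)
    (hv : ‖v‖ = 1) (w : Metric.sphere (0 : E) 1) (hw : w.1 = -v) : stereographic hv w = 0 := by
  have h := stereographic_apply_neg (⟨v, by simp [hv]⟩ : Metric.sphere (0 : E) 1)
  have : w = -(⟨v, by simp [hv]⟩ : Metric.sphere (0 : E) 1) := Subtype.ext hw
  rw [this]
  exact h

theorem stereoP_eq_zero (x : PSph κ) : stereoP x = 0 ↔ x.1 (Sum.inl ()) = -1 := by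
  have hneg : (-1 : ℂ) ≠ 1 := by norm_num
  let y : PSph κ := ⟨Pi.single (Sum.inl ()) (-1), by simp [← Pi.single_star], by simpa using hneg⟩
  have hy : (toSph y).1 = -northP κ := by
    ext i
    simp [toSph, y, northP, Pi.single_apply]
    split_ifs <;> simp
  have h0 : stereoP y = 0 := by
    exact stereo_neg _ (norm_northP κ) (toSph y) hy
  rw [← h0, (stereoP (κ := κ)).injective.eq_iff]
  constructor
  · rintro rfl
    simp [y]
  · intro h
    have := eq_of_coord (WithLp.toLp 2 x.1) ((dot_eq_one_iff x.1).1 x.2.1) (-1) (by simp) h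
    apply Subtype.ext
    funext i
    have := congrArg (fun v => v i) this
    simpa [y, Pi.single_apply] using this

theorem rank_W (k₀ : κ) : 1 < Module.rank ℝ (ℝ ∙ northP κ)ᗮ := by
  have h := Submodule.finrank_add_finrank_orthogonal (ℝ ∙ northP κ)
  have h1 : Module.finrank ℝ (ℝ ∙ northP κ) = 1 := finrank_span_singleton (by simp [northP])
  have h2 : Module.finrank ℝ (EuclideanSpace ℂ (Unit ⊕ κ)) = 2 * (1 + Fintype.card κ) := by
    rw [← Module.finrank_mul_finrank ℝ ℂ]
    simp [Complex.finrank_real_complex]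
  have h3 : 0 < Fintype.card κ := Fintype.card_pos_iff.2 ⟨k₀⟩
  rw [← Module.finrank_eq_rank]
  norm_cast
  omega

theorem isSimplyConnected_USet (k₀ : κ) [SimplyConnectedSpace (specialUnitaryGroup κ ℂ)] :
    IsSimplyConnected (USet κ) := by
  let e : USet κ ≃ₜ (ℝ ∙ northP κ)ᗮ × specialUnitaryGroup κ ℂ :=
    (trivP k₀).trans (stereoP.prodCongr (Homeomorph.refl _))
  have h1 := e.toHomotopyEquiv.trans
    ((ContractibleSpace.hequiv (ℝ ∙ northP κ)ᗮ Unit).some.prodCongr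
      (ContinuousMap.HomotopyEquiv.refl (specialUnitaryGroup κ ℂ)))
  have h2 := h1.trans (Homeomorph.punitProd (specialUnitaryGroup κ ℂ)).toHomotopyEquiv
  exact h2.simplyConnectedSpace

theorem isPathConnected_inter (k₀ : κ) [SimplyConnectedSpace (specialUnitaryGroup κ ℂ)] :
    IsPathConnected (USet κ ∩ {g | g.1 (Sum.inl ()) (Sum.inl ()) ≠ -1}) := by
  let e : USet κ ≃ₜ (ℝ ∙ northP κ)ᗮ × specialUnitaryGroup κ ℂ :=
    (trivP k₀).trans (stereoP.prodCongr (Homeomorph.refl _))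
  have h1 : IsPathConnected ({0}ᶜ : Set (ℝ ∙ northP κ)ᗮ) :=
    isPathConnected_compl_singleton_of_one_lt_rank (rank_W k₀) 0
  have h2 := h1.prod (isPathConnected_univ (X := specialUnitaryGroup κ ℂ))
  have h3 := (h2.image (e.symm.continuous)).image continuous_subtype_val
  convert h3 using 1
  ext g
  constructor
  · rintro ⟨hg, hg'⟩
    refine ⟨⟨g, hg⟩, ⟨e ⟨g, hg⟩, ⟨?_, trivial⟩, by simp⟩, rfl⟩
    intro h
    exact hg' ((stereoP_eq_zero (colP ⟨g, hg⟩)).1 h)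
  · rintro ⟨g, ⟨w, ⟨hw, -⟩, rfl⟩, rfl⟩
    refine ⟨Subtype.property _, ?_⟩
    intro h
    have h4 := (stereoP_eq_zero (colP (e.symm w))).2 h
    have h5 : (e (e.symm w)).1 = 0 := h4
    rw [e.apply_symm_apply] at h5
    exact hw h5

theorem simplyConnected_step (k₀ : κ) [SimplyConnectedSpace (specialUnitaryGroup κ ℂ)] :
    SimplyConnectedSpace (specialUnitaryGroup (Unit ⊕ κ) ℂ) := by
  have hc : Continuous fun g : specialUnitaryGroup (Unit ⊕ κ) ℂ =>
      g.1 (Sum.inl ()) (Sum.inl ()) := continuous_subtype_val.matrix_elem _ _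
  refine simplyConnectedSpace_of_cover (U := USet κ)
    (V := {g | g.1 (Sum.inl ()) (Sum.inl ()) ≠ -1}) ?_ ?_ ?_ (isSimplyConnected_USet k₀) ?_
    (isPathConnected_inter k₀)
  · exact isOpen_ne_fun hc continuous_const
  · exact isOpen_ne_fun hc continuous_const
  · rw [eq_univ_iff_forall]
    intro g
    by_contra h
    simp only [mem_union, mem_ofPred_eq, not_or, not_not] at h
    have := h.1.symm.trans h.2
    norm_num at this
  · let d : Unit ⊕ κ → ℂ := Sum.elim (fun _ => -1) (Pi.mulSingle k₀ (-1))
    have hk : diagonal d ∈ specialUnitaryGroup (Unit ⊕ κ) ℂ := by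
      rw [mem_specialUnitaryGroup_iff]
      constructor
      · apply diagonal_mem_unitary
        rintro (i | i)
        · simp [d]
        · by_cases h : i = k₀
          · subst h; simp [d]
          · simp [d, Pi.mulSingle_eq_of_ne h]
      · rw [det_diagonal, Fintype.prod_sum_type]
        simp [d, Finset.prod_pi_mulSingle']
    have h := (Homeomorph.mulLeft (⟨diagonal d, hk⟩ : specialUnitaryGroup (Unit ⊕ κ) ℂ)
      ).isSimplyConnected_preimage.2 (isSimplyConnected_USet k₀)
    convert h using 1
    ext g
    simp only [mem_ofPred_eq, mem_preimage, Homeomorph.coe_mulLeft, Submonoid.coe_mul,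
      diagonal_mul, d, Sum.elim_inl, ne_eq]
    rw [neg_mul, one_mul, neg_eq_iff_eq_neg]

end

/-- Reindexing. -/
def reindexSU {ι κ : Type*} [Fintype ι] [DecidableEq ι] [Fintype κ] [DecidableEq κ] (e : ι ≃ κ) :
    specialUnitaryGroup ι ℂ ≃ₜ specialUnitaryGroup κ ℂ where
  toFun g := ⟨g.1.submatrix e.symm e.symm, by
    have h := mem_specialUnitaryGroup_iff.1 g.2
    rw [mem_specialUnitaryGroup_iff, mem_unitaryGroup_iff, star_eq_conjTranspose,
      conjTranspose_submatrix, submatrix_mul_equiv, det_submatrix_equiv_self,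
      ← star_eq_conjTranspose, (mem_unitaryGroup_iff).1 h.1]
    exact ⟨submatrix_one_equiv _, h.2⟩⟩
  invFun g := ⟨g.1.submatrix e e, by
    have h := mem_specialUnitaryGroup_iff.1 g.2
    rw [mem_specialUnitaryGroup_iff, mem_unitaryGroup_iff, star_eq_conjTranspose,
      conjTranspose_submatrix, submatrix_mul_equiv, det_submatrix_equiv_self,
      ← star_eq_conjTranspose, (mem_unitaryGroup_iff).1 h.1]
    exact ⟨submatrix_one_equiv _, h.2⟩⟩
  left_inv g := by apply Subtype.ext; ext i j; simp
  right_inv g := by apply Subtype.ext; ext i j; simp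
  continuous_toFun := Continuous.subtype_mk (continuous_subtype_val.matrix_submatrix _ _) _
  continuous_invFun := Continuous.subtype_mk (continuous_subtype_val.matrix_submatrix _ _) _

theorem simplyConnected_SU (n : ℕ) :
    SimplyConnectedSpace (specialUnitaryGroup (Fin (n + 1)) ℂ) := by
  induction n with
  | zero =>
    rw [zero_add]
    have : Subsingleton (specialUnitaryGroup (Fin 1) ℂ) := by
      constructor
      intro a b
      have ha := (mem_specialUnitaryGroup_iff.1 a.2).2
      have hb := (mem_specialUnitaryGroup_iff.1 b.2).2
      apply Subtype.ext
      ext i j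
      rw [det_unique] at ha hb
      rw [Subsingleton.elim i default, Subsingleton.elim j default, ha, hb]
    have : ContractibleSpace (specialUnitaryGroup (Fin 1) ℂ) := by
      have : Unique (specialUnitaryGroup (Fin 1) ℂ) := ⟨⟨1⟩, fun _ => Subsingleton.elim _ _⟩
      exact (Homeomorph.homeomorphOfUnique _ Unit).contractibleSpace
    infer_instance
  | succ n ih =>
    have h := simplyConnected_step (κ := Fin (n + 1)) 0
    let e : Unit ⊕ Fin (n + 1) ≃ Fin (n + 1 + 1) := Fintype.equivOfCardEq (by simp; omega)
    exact (reindexSU e).symm.toHomotopyEquiv.simplyConnectedSpace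
end

section
open Matrix
/-- comparison -/
def SU_homeo (n : ℕ) : SU n ≃ₜ specialUnitaryGroup (Fin n) ℂ where
  toFun g := ⟨g.1.1, mem_specialUnitaryGroup_iff.2 ⟨g.1.2, g.2⟩⟩
  invFun g := ⟨⟨g.1, (mem_specialUnitaryGroup_iff.1 g.2).1⟩, (mem_specialUnitaryGroup_iff.1 g.2).2⟩
  left_inv _ := rfl
  right_inv _ := rfl
  continuous_toFun := by
    exact Continuous.subtype_mk (continuous_subtype_val.comp continuous_subtype_val) _
  continuous_invFun := by
    exact Continuous.subtype_mk (Continuous.subtype_mk continuous_subtype_val _) _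

theorem root_mul_star {n : ℕ} [NeZero n] (ζ : rootsOfUnity n ℂ) :
    ((ζ : ℂˣ) : ℂ) * star ((ζ : ℂˣ) : ℂ) = 1 := by
  have h : ‖((ζ : ℂˣ) : ℂ)‖ = 1 := Complex.norm_eq_one_of_mem_rootsOfUnity ζ.2
  have := Complex.mul_conj' ((ζ : ℂˣ) : ℂ)
  rw [h] at this
  simpa using this

/-- scalar matrices -/
def scalSU {n : ℕ} [NeZero n] : rootsOfUnity n ℂ →* Subgroup.center (SU n) where
  toFun ζ := ⟨⟨⟨diagonal fun _ => ((ζ : ℂˣ) : ℂ), diagonal_mem_unitary _ fun _ => root_mul_star ζ⟩, by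
    show (diagonal _).det = 1
    rw [det_diagonal]
    have := (mem_rootsOfUnity' n (ζ : ℂˣ)).1 ζ.2
    simpa using this⟩, by
    rw [Subgroup.mem_center_iff]
    intro g
    apply Subtype.ext
    apply Subtype.ext
    ext i j
    show (g.1.1 * diagonal (fun _ : Fin n => ((ζ : ℂˣ) : ℂ)) : Matrix (Fin n) (Fin n) ℂ) i j =
      (diagonal (fun _ : Fin n => ((ζ : ℂˣ) : ℂ)) * g.1.1 : Matrix (Fin n) (Fin n) ℂ) i j
    rw [mul_diagonal, diagonal_mul, mul_comm]⟩
  map_one' := by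
    apply Subtype.ext
    apply Subtype.ext
    apply Subtype.ext
    show diagonal _ = 1
    simp
  map_mul' a b := by
    apply Subtype.ext
    apply Subtype.ext
    apply Subtype.ext
    show diagonal _ = diagonal _ * diagonal _
    simp

theorem center_comm {n : ℕ} (A : Subgroup.center (SU n)) (B : Matrix (Fin n) (Fin n) ℂ)
    (hB : B ∈ unitaryGroup (Fin n) ℂ) (hB' : B.det = 1) : B * A.1.1.1 = A.1.1.1 * B := by
  have := Subgroup.mem_center_iff.1 A.2 ⟨⟨B, hB⟩, hB'⟩
  exact congrArg (fun g : SU n => g.1.1) this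

theorem center_offdiag {n : ℕ} (A : Subgroup.center (SU n)) (i j : Fin n) (hij : i ≠ j) :
    A.1.1.1 i j = 0 := by
  let d : Fin n → ℂ := Pi.mulSingle i Complex.I * Pi.mulSingle j (-Complex.I)
  have hd : ∀ k, d k * star (d k) = 1 := by
    intro k
    by_cases h1 : k = i
    · subst h1; simp [d, Pi.mulSingle_eq_of_ne hij]
    · by_cases h2 : k = j
      · subst h2; simp [d, Pi.mulSingle_eq_of_ne h1]
      · simp [d, Pi.mulSingle_eq_of_ne h1, Pi.mulSingle_eq_of_ne h2]
  have h := center_comm A (diagonal d) (diagonal_mem_unitary d hd) (by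
    rw [det_diagonal]
    simp [d, Finset.prod_mul_distrib, Finset.prod_pi_mulSingle'])
  have := congrFun (congrFun h i) j
  rw [diagonal_mul, mul_diagonal] at this
  simp [d, Pi.mulSingle_eq_of_ne hij, Pi.mulSingle_eq_of_ne hij.symm] at this
  have h2 : (2 * Complex.I) * A.1.1.1 i j = 0 := by linear_combination this
  simpa using h2

theorem center_diag {n : ℕ} (A : Subgroup.center (SU n)) (i j : Fin n) :
    A.1.1.1 i i = A.1.1.1 j j := by
  by_cases hij : i = j
  · rw [hij]
  let d : Fin n → ℂ := Pi.mulSingle i (-1)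
  let τ : Equiv.Perm (Fin n) := Equiv.swap i j
  have hd : ∀ k, d k * star (d k) = 1 := by
    intro k
    by_cases h1 : k = i
    · subst h1; simp [d]
    · simp [d, Pi.mulSingle_eq_of_ne h1]
  have hτ : τ.permMatrix ℂ ∈ unitaryGroup (Fin n) ℂ := by
    rw [mem_unitaryGroup_iff, star_eq_conjTranspose, conjTranspose_permMatrix, ← permMatrix_mul]
    simp
  have h := center_comm A (diagonal d * τ.permMatrix ℂ)
    (mul_mem (diagonal_mem_unitary d hd) hτ) (by
    rw [det_mul, det_diagonal, det_permutation]
    simp [d, τ, Finset.prod_pi_mulSingle', Equiv.Perm.sign_swap hij])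
  have := congrFun (congrFun h i) j
  rw [mul_assoc, diagonal_mul, ← mul_assoc] at this
  unfold Equiv.Perm.permMatrix at this
  rw [PEquiv.toMatrix_toPEquiv_mul, PEquiv.mul_toMatrix_toPEquiv] at this
  simp only [submatrix_apply, mul_diagonal, id] at this
  simp [τ, d] at this
  exact this.symm

theorem scalSU_bij {n : ℕ} [NeZero n] : Function.Bijective (scalSU (n := n)) := by
  constructor
  · intro a b h
    have h1 : diagonal (fun _ : Fin n => ((a : ℂˣ) : ℂ)) = diagonal fun _ => ((b : ℂˣ) : ℂ) :=
      congrArg (fun g : Subgroup.center (SU n) => g.1.1.1) h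
    have := congrFun (diagonal_injective h1) 0
    exact Subtype.ext (Units.ext this)
  · intro A
    have hA : A.1.1.1 = diagonal fun _ => A.1.1.1 0 0 := by
      ext i j
      by_cases h : i = j
      · subst h; simpa using center_diag A i 0
      · simpa [h] using center_offdiag A i j h
    have hp : (A.1.1.1 0 0) ^ n = 1 := by
      have : A.1.1.1.det = 1 := A.1.2
      rw [hA, det_diagonal] at this
      simpa using this
    refine ⟨rootsOfUnity.mkOfPowEq _ hp, ?_⟩
    apply Subtype.ext
    apply Subtype.ext
    apply Subtype.ext
    refine Eq.trans ?_ hA.symm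
    show diagonal _ = diagonal _
    simp
end

/-- For every `n ≥ 1` the fundamental group of `PU(n)`, based at the identity coset,
is isomorphic to `ℤ/nℤ`. -/
theorem fundamentalGroup_PU (n : ℕ) (hn : 1 ≤ n) :
    Nonempty (FundamentalGroup (PU n) 1 ≃* Multiplicative (ZMod n)) := by
  have : NeZero n := ⟨by omega⟩
  have : SimplyConnectedSpace (SU n) := by
    obtain ⟨m, rfl⟩ := Nat.exists_eq_add_of_le' hn
    have := simplyConnected_SU m
    exact (SU_homeo (m + 1)).toHomotopyEquiv.simplyConnectedSpace
  let e₁ : rootsOfUnity n ℂ ≃* Subgroup.center (SU n) := MulEquiv.ofBijective _ scalSU_bij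
  have : Finite (Subgroup.center (SU n)) := Finite.of_equiv _ e₁.toEquiv
  have hdisc : IsDiscrete ((Subgroup.center (SU n) : Subgroup (SU n)) : Set (SU n)) :=
    ⟨inferInstance⟩
  have hcov := (Subgroup.center (SU n)).isQuotientCoveringMap hdisc
  let e₂ := hcov.fundamentalGroupEquiv (x := (1 : PU n)) ⟨1, rfl⟩
  let e₃ : ((Subgroup.center (SU n)).op)ᵐᵒᵖ ≃* Subgroup.center (SU n) :=
    { toFun := fun x => ⟨x.unop.1.unop, x.unop.2⟩
      invFun := fun c => MulOpposite.op ⟨MulOpposite.op c.1, c.2⟩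
      left_inv := fun _ => rfl
      right_inv := fun _ => rfl
      map_mul' := fun _ _ => rfl }
  have hcard : Nat.card (rootsOfUnity n ℂ) = n := by
    rw [Complex.card_rootsOfUnity]
  let e₄ : Multiplicative (ZMod n) ≃* rootsOfUnity n ℂ := by
    have := zmodCyclicMulEquiv (G := rootsOfUnity n ℂ) inferInstance
    rwa [hcard] at this
  exact ⟨(e₂.trans e₃).trans (e₁.symm.trans e₄.symm)⟩
end
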